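/- arXiv:0809.3231 — 8 statements merged into one kernel-verified Lean document; each statement's English description precedes it below -/
import Mathlib

section
/- Fix constants C > 0, b > 0, η > 0 and wave speeds c₊ ∈ [1,2], c₋ ∈ [−2,−1]. There exist constants C̃ > 0 and ε₀ > 0 (depending only on C, b, η, c₊, c₋) such that for every ε ∈ (0, ε₀) and every N > 0 the following holds. Set a := ε^{3/2}. Suppose ρ, π : [0,N] → (ℤ → ℝ) are curves which, viewed as curves in each of the three Hilbert spaces ℓ²(ℤ), ℓ²(ℤ) with weight e^{2aj}, and ℓ²(ℤ) with weight e^{−2aj}, are differentiable, take values in the space, and satisfy ρ'(t) = (S−I)π(t) and π'(t) = (I−S⁻¹)ρ(t) + g(t) (with g(t) lying in all three spaces), together with ρ(0) = π(0) = 0. Define the time-dependent weighted norms ‖x‖_{+,t}² := Σ_{j∈ℤ} e^{2a(j − c₊N + c₊t)} x_j² and ‖x‖_{−,t}² := Σ_{j∈ℤ} e^{−2a(j − c₋N + c₋t)} x_j², and the energy E(t) := ½(‖ρ(t)‖² + ‖ρ(t)‖_{+,t}² + ‖ρ(t)‖_{−,t}² + ‖π(t)‖² + ‖π(t)‖_{+,t}²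 + ‖π(t)‖_{−,t}²). Assume the smallness condition: for all t ∈ [0,N], ‖g(t)‖·‖π(t)‖ + ‖g(t)‖_{+,t}·‖π(t)‖_{+,t} + ‖g(t)‖_{−,t}·‖π(t)‖_{−,t} ≤ C[(ε^{3/2} + E(t)^{1/2})E(t) + ε^{4+η} e^{−bε(N−t)}]. Then E(t) ≤ C̃ ε³ e^{−bε(N−t)} for all t ∈ [0,N]. -/
/-- The square of the `ℓ²(ℤ)` norm: `‖x‖² = Σ_j x_j²`. -/
noncomputable def sqSum (x : ℤ → ℝ) : ℝ := ∑' j : ℤ, (x j) ^ 2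

/-- The square of the weighted `ℓ²(ℤ)` norm with weight `e^{2a(j-θ)}`. -/
noncomputable def wSqSum (a θ : ℝ) (x : ℤ → ℝ) : ℝ :=
  ∑' j : ℤ, Real.exp (2 * a * ((j : ℝ) - θ)) * (x j) ^ 2

/-- The energy `E(t)` of the curve `(ρ,π)`: half the sum of the squares of the
`ℓ²(ℤ)` norms and the two moving-weight norms (weights `e^{±2a(j - c_±(N-t))}`)
of `ρ(t)` and `π(t)`. -/
noncomputable def fpuEnergy (a cp cm N : ℝ) (ρ π : ℝ → ℤ → ℝ) (t : ℝ) : ℝ :=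
  (1 / 2) * (sqSum (ρ t) + wSqSum a (cp * (N - t)) (ρ t) + wSqSum (-a) (cm * (N - t)) (ρ t)
    + sqSum (π t) + wSqSum a (cp * (N - t)) (π t) + wSqSum (-a) (cm * (N - t)) (π t))

open scoped Topology in
theorem aux_eps (C b η : ℝ) (hb : 0 < b) (hη : 0 < η) :
    ∃ ε₀ > (0 : ℝ), ε₀ ≤ 1 ∧ ∀ ε ∈ Set.Ioo (0 : ℝ) ε₀,
      (8 + 2 * C) * ε ^ ((1 : ℝ) / 2) + C * ε ^ η < b := by
  have h : Filter.Tendsto (fun ε : ℝ => (8 + 2 * C) * ε ^ ((1 : ℝ) / 2) + C * ε ^ η)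
      (𝓝 0) (𝓝 ((8 + 2 * C) * (0 : ℝ) ^ ((1 : ℝ) / 2) + C * (0 : ℝ) ^ η)) := by
    have h1 : ContinuousAt (fun ε : ℝ => ε ^ ((1 : ℝ) / 2)) 0 :=
      Real.continuousAt_rpow_const _ _ (Or.inr (by norm_num))
    have h2 : ContinuousAt (fun ε : ℝ => ε ^ η) 0 :=
      Real.continuousAt_rpow_const _ _ (Or.inr hη.le)
    exact (h1.const_mul (8 + 2 * C)).add (h2.const_mul C)
  rw [Real.zero_rpow (by norm_num), Real.zero_rpow hη.ne'] at h
  have h3 := h.eventually (gt_mem_nhds (show (8 + 2 * C) * 0 + C * 0 < b by simpa using hb))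
  obtain ⟨δ, hδ, hδ'⟩ := Metric.eventually_nhds_iff.1 h3
  refine ⟨min δ 1, by positivity, min_le_right _ _, fun ε hε => hδ' ?_⟩
  rw [Real.dist_eq, sub_zero, abs_of_pos hε.1]
  exact lt_of_lt_of_le hε.2 (min_le_left _ _)

abbrev L2Z := lp (fun _ : ℤ => ℝ) 2

theorem L2Z_summable (x : L2Z) : Summable fun j : ℤ => (x j) ^ 2 := by
  have h := (lp.memℓp x).summable (by norm_num)
  refine h.congr fun j => ?_
  simp [sq_abs]

theorem L2Z_norm_sq (x : L2Z) : ‖x‖ ^ 2 = ∑' j : ℤ, (x j) ^ 2 := by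
  have h := lp.norm_rpow_eq_tsum (p := 2) (by norm_num) x
  simpa [sq_abs] using h

theorem L2Z_inner (x y : L2Z) : HasSum (fun j : ℤ => x j * y j) (inner ℝ x y) := by
  have h := lp.hasSum_inner (𝕜 := ℝ) x y
  refine h.congr_fun ?_
  intro j
  simp [mul_comm]

theorem wSq_eq (a θ w : ℝ) (x : ℤ → ℝ) (X : L2Z)
    (h : ∀ j : ℤ, X j = Real.exp (w * a * (j : ℝ)) * x j) :
    wSqSum (w * a) θ x = Real.exp (-2 * (w * a * θ)) * ‖X‖ ^ 2 := by
  rw [L2Z_norm_sq, wSqSum, ← tsum_mul_left]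
  refine tsum_congr fun j => ?_
  rw [h, mul_pow, ← Real.exp_nat_mul, ← mul_assoc (Real.exp _), ← Real.exp_add]
  congr 2
  push_cast
  ring

theorem shift_bound (r p : L2Z) :
    ∃ s : ℝ, HasSum (fun j : ℤ => r j * p (j + 1)) s ∧ |s| ≤ (‖r‖ ^ 2 + ‖p‖ ^ 2) / 2 := by
  have hp : HasSum (fun j : ℤ => (p (j + 1)) ^ 2) (‖p‖ ^ 2) := by
    have := (L2Z_summable p).hasSum
    rw [← L2Z_norm_sq] at this
    exact (Equiv.addRight (1 : ℤ)).hasSum_iff.2 this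
  have hr : HasSum (fun j : ℤ => (r j) ^ 2) (‖r‖ ^ 2) := by
    have := (L2Z_summable r).hasSum
    rwa [← L2Z_norm_sq] at this
  have hs := (hr.add hp).div_const 2
  have hb : ∀ j : ℤ, |r j * p (j + 1)| ≤ ((r j) ^ 2 + (p (j + 1)) ^ 2) / 2 := by
    intro j
    rw [abs_le]
    constructor <;> nlinarith [sq_nonneg (r j - p (j + 1)), sq_nonneg (r j + p (j + 1))]
  have hsum : Summable (fun j : ℤ => r j * p (j + 1)) :=
    Summable.of_norm_bounded hs.summable hb
  refine ⟨_, hsum.hasSum, ?_⟩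
  rw [abs_le]
  constructor
  · have := hasSum_le (fun j => (abs_le.1 (hb j)).1) hs.neg hsum.hasSum
    simpa using this
  · exact hasSum_le (fun j => (abs_le.1 (hb j)).2) hsum.hasSum hs

theorem inner_bound (x : ℝ) (r p dr dp γ : L2Z)
    (hdr : ∀ j : ℤ, dr j = Real.exp (-x) * p (j + 1) - p j)
    (hdp : ∀ j : ℤ, dp j = r j - Real.exp x * r (j - 1) + γ j) :
    inner ℝ r dr + inner ℝ p dp
      ≤ |Real.exp (-x) - Real.exp x| * ((‖r‖ ^ 2 + ‖p‖ ^ 2) / 2) + ‖γ‖ * ‖p‖ := by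
  obtain ⟨s, hs, hsb⟩ := shift_bound r p
  have hs' : HasSum (fun j : ℤ => r (j - 1) * p j) s := by
    have := (Equiv.subRight (1 : ℤ)).hasSum_iff.2 hs
    refine this.congr_fun ?_
    intro j
    simp
  have h1 : inner ℝ r dr = Real.exp (-x) * s - inner ℝ r p := by
    refine (L2Z_inner r dr).unique ?_
    refine ((hs.mul_left (Real.exp (-x))).sub (L2Z_inner r p)).congr_fun ?_
    intro j
    rw [hdr]; ring
  have h2 : inner ℝ p dp = inner ℝ r p - Real.exp x * s + inner ℝ γ p := by
    refine (L2Z_inner p dp).unique ?_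
    refine (((L2Z_inner r p).sub (hs'.mul_left (Real.exp x))).add (L2Z_inner γ p)).congr_fun ?_
    intro j
    rw [hdp]; ring
  have h3 := real_inner_le_norm γ p
  have h4 : (Real.exp (-x) - Real.exp x) * s
      ≤ |Real.exp (-x) - Real.exp x| * ((‖r‖ ^ 2 + ‖p‖ ^ 2) / 2) := by
    refine (le_abs_self _).trans ?_
    rw [abs_mul]
    gcongr
  linarith

theorem exp_diff (x a : ℝ) (ha : a ≤ 1) (hx : |x| ≤ a) :
    |Real.exp (-x) - Real.exp x| ≤ 4 * a := by
  have h1 := Real.abs_exp_sub_one_le (x := x) (hx.trans ha)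
  have h2 := Real.abs_exp_sub_one_le (x := -x) (by rw [abs_neg]; exact hx.trans ha)
  rw [abs_neg] at h2
  rw [abs_le] at h1 h2 ⊢
  constructor <;> linarith

/-- single weight energy: derivative -/
theorem deriv_piece (κ N t : ℝ) (s : Set ℝ) (R P : ℝ → L2Z) (dr dp : L2Z)
    (hR : HasDerivWithinAt R dr s t) (hP : HasDerivWithinAt P dp s t) :
    HasDerivWithinAt
      (fun t => (1 / 2) * (Real.exp (-2 * (κ * (N - t))) * (‖R t‖ ^ 2 + ‖P t‖ ^ 2)))
      (Real.exp (-2 * (κ * (N - t))) *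
        (κ * (‖R t‖ ^ 2 + ‖P t‖ ^ 2) + (inner ℝ (R t) dr + inner ℝ (P t) dp))) s t := by
  have h1 : HasDerivAt (fun t : ℝ => -2 * (κ * (N - t))) (2 * κ) t := by
    have := (((hasDerivAt_id' t).const_sub N).const_mul κ).const_mul (-2)
    exact this.congr_deriv (by ring)
  have h2 := (h1.exp.hasDerivWithinAt (s := s)).mul (hR.norm_sq.add hP.norm_sq)
  refine (h2.const_mul (1 / 2)).congr_deriv ?_
  simp only [Pi.add_apply]
  ring

/-- single weight energy: bound -/
theorem piece_bound (a x κ θ w : ℝ) (N t : ℝ) (ha : a ≤ 1) (hx : x = w * a) (hxa : |x| ≤ a)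
    (hκ : κ ≤ 2 * a) (hθ : κ * (N - t) = w * a * θ)
    (r p dr dp : L2Z) (ρ π g : ℤ → ℝ)
    (hr : ∀ j : ℤ, r j = Real.exp (w * a * (j : ℝ)) * ρ j)
    (hp : ∀ j : ℤ, p j = Real.exp (w * a * (j : ℝ)) * π j)
    (hdr : ∀ j : ℤ, dr j = Real.exp (w * a * (j : ℝ)) * (π (j + 1) - π j))
    (hdp : ∀ j : ℤ, dp j = Real.exp (w * a * (j : ℝ)) * (ρ j - ρ (j - 1) + g j))
    (hg : Summable fun j : ℤ => Real.exp (2 * w * a * (j : ℝ)) * (g j) ^ 2) :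
    Real.exp (-2 * (κ * (N - t))) *
        (κ * (‖r‖ ^ 2 + ‖p‖ ^ 2) + (inner ℝ r dr + inner ℝ p dp))
      ≤ 8 * a * ((1 / 2) * (Real.exp (-2 * (κ * (N - t))) * (‖r‖ ^ 2 + ‖p‖ ^ 2)))
        + Real.sqrt (wSqSum (w * a) θ g) * Real.sqrt (wSqSum (w * a) θ π) := by
  have hmem : Memℓp (fun j : ℤ => Real.exp (w * a * (j : ℝ)) * g j) 2 := by
    apply memℓp_gen
    refine hg.congr fun j => ?_
    have : Real.exp (2 * w * a * (j : ℝ)) = Real.exp (w * a * (j : ℝ)) ^ 2 := by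
      rw [← Real.exp_nat_mul]; congr 1; push_cast; ring
    rw [this, ← mul_pow]
    simp only [ENNReal.toReal_ofNat, Real.rpow_ofNat, Real.norm_eq_abs, sq_abs]
  set γ : L2Z := ⟨_, hmem⟩ with hγ
  have hγ' : ∀ j : ℤ, γ j = Real.exp (w * a * (j : ℝ)) * g j := fun j => rfl
  have hb := inner_bound x r p dr dp γ
    (by
      intro j
      rw [hdr, hp, hp, ← mul_assoc, ← Real.exp_add, hx]
      have : -(w * a) + w * a * ((j + 1 : ℤ) : ℝ) = w * a * j := by push_cast; ring
      rw [this]; ring)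
    (by
      intro j
      rw [hdp, hr, hr, hγ', ← mul_assoc, ← Real.exp_add, hx]
      have : w * a + w * a * ((j - 1 : ℤ) : ℝ) = w * a * j := by push_cast; ring
      rw [this]; ring)
  have he := exp_diff x a ha hxa
  rw [wSq_eq a θ w g γ hγ', wSq_eq a θ w π p hp, ← hθ]
  set φ := Real.exp (-2 * (κ * (N - t))) with hφ
  have hφ0 : 0 < φ := Real.exp_pos _
  have hsq : Real.sqrt (φ * ‖γ‖ ^ 2) * Real.sqrt (φ * ‖p‖ ^ 2) = φ * (‖γ‖ * ‖p‖) := by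
    rw [Real.sqrt_mul hφ0.le, Real.sqrt_mul hφ0.le, Real.sqrt_sq (norm_nonneg _),
      Real.sqrt_sq (norm_nonneg _)]
    have := Real.mul_self_sqrt hφ0.le
    linear_combination (‖γ‖ * ‖p‖) * this
  rw [hsq]
  have hn : 0 ≤ ‖r‖ ^ 2 + ‖p‖ ^ 2 := by positivity
  have h1 := mul_le_mul_of_nonneg_right hκ hn
  have h2 := mul_le_mul_of_nonneg_right he (show 0 ≤ (‖r‖ ^ 2 + ‖p‖ ^ 2) / 2 by positivity)
  have h3 : κ * (‖r‖ ^ 2 + ‖p‖ ^ 2) + (inner ℝ r dr + inner ℝ p dp)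
      ≤ 4 * a * (‖r‖ ^ 2 + ‖p‖ ^ 2) + ‖γ‖ * ‖p‖ := by linarith
  have h4 := mul_le_mul_of_nonneg_left h3 hφ0.le
  linarith

/-- Energy estimate for the discrete wave equation `ρ̇ = (S−I)π`, `π̇ = (I−S⁻¹)ρ + g`
driven from rest by a small inhomogeneous term `g`.  The curves `ρ, π` are required
to be differentiable as curves in each of the three Hilbert spaces `ℓ²(ℤ)`,
`ℓ²(e^{2aj})`, `ℓ²(e^{-2aj})` (`a = ε^{3/2}`); this is encoded by the `lp`-valued
curves `Rc w, Pc w` (the weighted copies of `ρ, π` for weight signs `w ∈ {-1,0,1}`)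
having derivatives `DRc w, DPc w` given by the weighted copies of `(S−I)π` and
`(I−S⁻¹)ρ + g`.  Under the smallness condition on `g`, the energy satisfies
`E(t) ≤ C̃ ε³ e^{-bε(N-t)}` on `[0,N]`. -/
theorem driven_discrete_wave_energy_estimate
    (C b η cp cm : ℝ) (hC : 0 < C) (hb : 0 < b) (hη : 0 < η)
    (hcp : cp ∈ Set.Icc (1 : ℝ) 2) (hcm : cm ∈ Set.Icc (-2 : ℝ) (-1)) :
    ∃ Ct > (0 : ℝ), ∃ ε₀ > (0 : ℝ), ∀ ε ∈ Set.Ioo (0 : ℝ) ε₀, ∀ N > (0 : ℝ),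
      ∀ ρ π g : ℝ → ℤ → ℝ,
      ∀ Rc Pc DRc DPc : ℝ → ℝ → lp (fun _ : ℤ => ℝ) 2,
      -- the `lp`-valued curves are the weighted copies of `ρ`, `π`, `(S-I)π`,
      -- `(I-S⁻¹)ρ + g` with weights `e^{w ε^{3/2} j}`, `w ∈ {-1,0,1}`,
      -- and the former are differentiable with the latter as derivatives:
      (∀ w ∈ ({-1, 0, 1} : Set ℝ), ∀ t ∈ Set.Icc (0 : ℝ) N,
        (∀ j : ℤ, Rc w t j = Real.exp (w * ε ^ ((3 : ℝ) / 2) * (j : ℝ)) * ρ t j) ∧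
        (∀ j : ℤ, Pc w t j = Real.exp (w * ε ^ ((3 : ℝ) / 2) * (j : ℝ)) * π t j) ∧
        (∀ j : ℤ, DRc w t j
            = Real.exp (w * ε ^ ((3 : ℝ) / 2) * (j : ℝ)) * (π t (j + 1) - π t j)) ∧
        (∀ j : ℤ, DPc w t j
            = Real.exp (w * ε ^ ((3 : ℝ) / 2) * (j : ℝ)) * (ρ t j - ρ t (j - 1) + g t j)) ∧
        HasDerivWithinAt (Rc w) (DRc w t) (Set.Icc (0 : ℝ) N) t ∧
        HasDerivWithinAt (Pc w) (DPc w t) (Set.Icc (0 : ℝ) N) t) →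
      -- `g(t)` lies in all three spaces:
      (∀ w ∈ ({-1, 0, 1} : Set ℝ), ∀ t ∈ Set.Icc (0 : ℝ) N,
        Summable fun j : ℤ => Real.exp (2 * w * ε ^ ((3 : ℝ) / 2) * (j : ℝ)) * (g t j) ^ 2) →
      -- the system starts from rest:
      (∀ j : ℤ, ρ 0 j = 0) → (∀ j : ℤ, π 0 j = 0) →
      -- smallness condition on `g`:
      (∀ t ∈ Set.Icc (0 : ℝ) N,
        Real.sqrt (sqSum (g t)) * Real.sqrt (sqSum (π t))
          + Real.sqrt (wSqSum (ε ^ ((3 : ℝ) / 2)) (cp * (N - t)) (g t))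
            * Real.sqrt (wSqSum (ε ^ ((3 : ℝ) / 2)) (cp * (N - t)) (π t))
          + Real.sqrt (wSqSum (-(ε ^ ((3 : ℝ) / 2))) (cm * (N - t)) (g t))
            * Real.sqrt (wSqSum (-(ε ^ ((3 : ℝ) / 2))) (cm * (N - t)) (π t))
        ≤ C * ((ε ^ ((3 : ℝ) / 2)
              + Real.sqrt (fpuEnergy (ε ^ ((3 : ℝ) / 2)) cp cm N ρ π t))
                * fpuEnergy (ε ^ ((3 : ℝ) / 2)) cp cm N ρ π t
            + ε ^ ((4 : ℝ) + η) * Real.exp (-(b * ε) * (N - t)))) →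
      -- conclusion: exponential energy estimate on `[0,N]`
      ∀ t ∈ Set.Icc (0 : ℝ) N,
        fpuEnergy (ε ^ ((3 : ℝ) / 2)) cp cm N ρ π t
          ≤ Ct * ε ^ 3 * Real.exp (-(b * ε) * (N - t)) := by
  obtain ⟨ε₀, hε₀, hε₀1, hsmall⟩ := aux_eps C b η hb hη
  refine ⟨1, one_pos, ε₀, hε₀, ?_⟩
  intro ε hε N hN ρ π g Rc Pc DRc DPc hcurve hg hρ0 hπ0 hsm
  have hε0 : 0 < ε := hε.1
  have hε1 : ε ≤ 1 := hε.2.le.trans hε₀1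
  have hkey := hsmall ε hε
  have ha_split : ε ^ ((3 : ℝ) / 2) = ε * ε ^ ((1 : ℝ) / 2) := by
    rw [show (3 : ℝ) / 2 = 1 + 1 / 2 by norm_num, Real.rpow_add hε0, Real.rpow_one]
  have hη_split : ε ^ ((4 : ℝ) + η) = ε ^ 4 * ε ^ η := by
    rw [Real.rpow_add hε0]; norm_cast
  have ha_sq : (ε ^ ((3 : ℝ) / 2)) ^ 2 = ε ^ 3 := by
    rw [← Real.rpow_natCast, ← Real.rpow_mul hε0.le, ← Real.rpow_natCast]; norm_num
  have ha1 : ε ^ ((3 : ℝ) / 2) ≤ 1 := Real.rpow_le_one hε0.le hε1 (by norm_num)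
  have ha0 : 0 < ε ^ ((3 : ℝ) / 2) := Real.rpow_pos_of_pos hε0 _
  set a := ε ^ ((3 : ℝ) / 2) with ha
  set E := fpuEnergy a cp cm N ρ π with hE
  have hw0 : (0 : ℝ) ∈ ({-1, 0, 1} : Set ℝ) := by simp
  have hw1 : (1 : ℝ) ∈ ({-1, 0, 1} : Set ℝ) := by simp
  have hwm : (-1 : ℝ) ∈ ({-1, 0, 1} : Set ℝ) := by simp
  -- single-weight energies
  let Q : ℝ → ℝ → ℝ → ℝ := fun w κ t =>
    (1 / 2) * (Real.exp (-2 * (κ * (N - t))) * (‖Rc w t‖ ^ 2 + ‖Pc w t‖ ^ 2))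
  let Q' : ℝ → ℝ → ℝ → ℝ := fun w κ t =>
    Real.exp (-2 * (κ * (N - t))) * (κ * (‖Rc w t‖ ^ 2 + ‖Pc w t‖ ^ 2)
      + (inner ℝ (Rc w t) (DRc w t) + inner ℝ (Pc w t) (DPc w t)))
  have hsq : ∀ x : ℤ → ℝ, sqSum x = wSqSum (0 * a) 0 x := by
    intro x; simp [sqSum, wSqSum]
  have hone : ∀ θ, ∀ x : ℤ → ℝ, wSqSum a θ x = wSqSum (1 * a) θ x := by
    intro θ x; rw [one_mul]
  have hmone : ∀ θ, ∀ x : ℤ → ℝ, wSqSum (-a) θ x = wSqSum (-1 * a) θ x := by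
    intro θ x; rw [neg_one_mul]
  have hEQ : ∀ t ∈ Set.Icc (0 : ℝ) N, E t = Q 0 0 t + Q 1 (a * cp) t + Q (-1) (-(a * cm)) t := by
    intro t ht
    obtain ⟨r0, p0, -⟩ := hcurve 0 hw0 t ht
    obtain ⟨r1, p1, -⟩ := hcurve 1 hw1 t ht
    obtain ⟨rm, pm, -⟩ := hcurve (-1) hwm t ht
    simp only [hE, fpuEnergy, Q]
    rw [hsq, hsq, hone, hone, hmone, hmone, wSq_eq a _ 0 _ _ r0, wSq_eq a _ 0 _ _ p0,
      wSq_eq a _ 1 _ _ r1, wSq_eq a _ 1 _ _ p1, wSq_eq a _ (-1) _ _ rm, wSq_eq a _ (-1) _ _ pm]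
    rw [show 1 * a * (cp * (N - t)) = a * cp * (N - t) by ring,
      show -1 * a * (cm * (N - t)) = -(a * cm) * (N - t) by ring,
      show 0 * a * 0 = 0 * (N - t) by ring]
    ring
  have hderiv : ∀ t ∈ Set.Icc (0 : ℝ) N,
      HasDerivWithinAt E (Q' 0 0 t + Q' 1 (a * cp) t + Q' (-1) (-(a * cm)) t)
        (Set.Icc (0 : ℝ) N) t := by
    intro t ht
    obtain ⟨-, -, -, -, d0, e0⟩ := hcurve 0 hw0 t ht
    obtain ⟨-, -, -, -, d1, e1⟩ := hcurve 1 hw1 t ht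
    obtain ⟨-, -, -, -, dm, em⟩ := hcurve (-1) hwm t ht
    have := ((deriv_piece 0 N t _ _ _ _ _ d0 e0).add
      (deriv_piece (a * cp) N t _ _ _ _ _ d1 e1)).add
      (deriv_piece (-(a * cm)) N t _ _ _ _ _ dm em)
    exact this.congr (fun y hy => hEQ y hy) (hEQ t ht)
  have hbound : ∀ t ∈ Set.Icc (0 : ℝ) N,
      Q' 0 0 t + Q' 1 (a * cp) t + Q' (-1) (-(a * cm)) t
        ≤ 8 * a * E t + C * ((a + Real.sqrt (E t)) * E t
            + ε ^ ((4 : ℝ) + η) * Real.exp (-(b * ε) * (N - t))) := by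
    intro t ht
    obtain ⟨r0, p0, dr0, dp0, -⟩ := hcurve 0 hw0 t ht
    obtain ⟨r1, p1, dr1, dp1, -⟩ := hcurve 1 hw1 t ht
    obtain ⟨rm, pm, drm, dpm, -⟩ := hcurve (-1) hwm t ht
    have b0 := piece_bound a (0 * a) 0 0 0 N t ha1 rfl (by simpa using ha0.le) (by linarith)
      (by ring) _ _ _ _ _ _ _ r0 p0 dr0 dp0 (hg 0 hw0 t ht)
    have b1 := piece_bound a (1 * a) (a * cp) (cp * (N - t)) 1 N t ha1 rfl
      (by simp [abs_of_pos ha0]) (by nlinarith [hcp.2])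
      (by ring) _ _ _ _ _ _ _ r1 p1 dr1 dp1 (hg 1 hw1 t ht)
    have bm := piece_bound a (-1 * a) (-(a * cm)) (cm * (N - t)) (-1) N t ha1 rfl
      (by simp [abs_of_pos ha0]) (by nlinarith [hcm.1])
      (by ring) _ _ _ _ _ _ _ rm pm drm dpm (hg (-1) hwm t ht)
    have hs := hsm t ht
    rw [hsq, hsq, hone, hone, hmone, hmone] at hs
    have hEt := hEQ t ht
    have : 8 * a * E t = 8 * a * Q 0 0 t + 8 * a * Q 1 (a * cp) t
        + 8 * a * Q (-1) (-(a * cm)) t := by rw [hEt]; ring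
    rw [this]
    simp only [Q, Q']
    linarith
  have hE0 : E 0 = 0 := by
    have h1 : ρ 0 = fun _ => 0 := funext hρ0
    have h2 : π 0 = fun _ => 0 := funext hπ0
    simp [hE, fpuEnergy, h1, h2, sqSum, wSqSum]
  have hF : ∀ t : ℝ, HasDerivAt (fun t => 1 * ε ^ 3 * Real.exp (-(b * ε) * (N - t)))
      (b * ε ^ 4 * Real.exp (-(b * ε) * (N - t))) t := by
    intro t
    have := ((((hasDerivAt_id' t).const_sub N).const_mul (-(b * ε))).exp).const_mul (1 * ε ^ 3)
    exact this.congr_deriv (by ring)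
  refine image_le_of_deriv_right_lt_deriv_boundary
    (f' := fun t => Q' 0 0 t + Q' 1 (a * cp) t + Q' (-1) (-(a * cm)) t)
    (fun t ht => (hderiv t ht).continuousWithinAt) ?_ ?_ hF ?_
  · intro t ht
    exact (hderiv t ⟨ht.1, ht.2.le⟩).mono_of_mem_nhdsWithin
      (Icc_mem_nhdsGE_of_mem ht)
  · rw [hE0]; positivity
  · intro t ht hEt
    have ht' : t ∈ Set.Icc (0 : ℝ) N := ⟨ht.1, ht.2.le⟩
    refine lt_of_le_of_lt (hbound t ht') ?_
    have hX1 : Real.exp (-(b * ε) * (N - t)) ≤ 1 := by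
      rw [Real.exp_le_one_iff]
      have := mul_nonneg (mul_pos hb hε0).le (sub_nonneg.2 ht'.2)
      linarith
    have hX0 : 0 < Real.exp (-(b * ε) * (N - t)) := Real.exp_pos _
    set X := Real.exp (-(b * ε) * (N - t)) with hX
    have hsqrt : Real.sqrt (E t) ≤ a := by
      apply Real.sqrt_le_iff.2 ⟨ha0.le, ?_⟩
      rw [hEt, ha_sq, one_mul]
      exact mul_le_of_le_one_right (by positivity) hX1
    have hEpos : 0 ≤ E t := by rw [hEt]; positivity
    have h1 : C * ((a + Real.sqrt (E t)) * E t) ≤ C * ((a + a) * E t) := by gcongr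
    have h2 := mul_lt_mul_of_pos_right hkey (show 0 < ε ^ 4 * X by positivity)
    calc 8 * a * E t + C * ((a + Real.sqrt (E t)) * E t + ε ^ ((4 : ℝ) + η) * X)
        ≤ 8 * a * E t + C * ((a + a) * E t) + C * (ε ^ ((4 : ℝ) + η) * X) := by linarith
      _ = ((8 + 2 * C) * ε ^ ((1 : ℝ) / 2) + C * ε ^ η) * (ε ^ 4 * X) := by
          rw [hEt, hη_split, ha_split]; ring
      _ < b * (ε ^ 4 * X) := h2
      _ = b * ε ^ 4 * X := by ring
end

section
/- Let N > 0, let 0 < c < β, and let B ≥ 0. Suppose E : [0,N] → ℝ is continuous on [0,N], differentiable on (0,N), satisfies E(0) = 0, and satisfies the differential inequality E'(t) ≤ c·E(t) + B·e^{−β(N−t)} for all t ∈ (0,N). Then E(t) ≤ (B/(β−c))·e^{−β(N−t)} for all t ∈ [0,N]. -/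
/-- Gronwall-type estimate for a scalar differential inequality with an
exponentially growing (in `t`) inhomogeneous term `e^{-β(N-t)}`. -/
theorem gronwall_exponential_forcing
    (N c β B : ℝ) (hN : 0 < N) (hc : 0 < c) (hcβ : c < β) (hB : 0 ≤ B)
    (E E' : ℝ → ℝ)
    (hcont : ContinuousOn E (Set.Icc 0 N))
    (hderiv : ∀ t ∈ Set.Ioo 0 N, HasDerivAt E (E' t) t)
    (hE0 : E 0 = 0)
    (hineq : ∀ t ∈ Set.Ioo 0 N, E' t ≤ c * E t + B * Real.exp (-β * (N - t))) :
    ∀ t ∈ Set.Icc 0 N, E t ≤ B / (β - c) * Real.exp (-β * (N - t)) := by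
  intro t ht
  have hd : 0 < β - c := sub_pos.mpr hcβ
  set K := B / (β - c) with hK
  have hK0 : 0 ≤ K := div_nonneg hB hd.le
  have hKB : K * (β - c) = B := div_mul_cancel₀ B hd.ne'
  have hg : ∀ s ∈ Set.Ioo 0 N, HasDerivAt
      (fun s => Real.exp (-c * s) * (E s - K * Real.exp (-β * (N - s))))
      (Real.exp (-c * s) * (E' s - c * E s - B * Real.exp (-β * (N - s)))) s := by
    intro s hs
    have h1 : HasDerivAt (fun s : ℝ => Real.exp (-c * s)) (Real.exp (-c * s) * (-c * 1)) s :=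
      ((hasDerivAt_id' s).const_mul (-c)).exp
    have h2 : HasDerivAt (fun s : ℝ => Real.exp (-β * (N - s)))
        (Real.exp (-β * (N - s)) * (-β * (-1))) s :=
      (((hasDerivAt_id' s).const_sub N).const_mul (-β)).exp
    refine (h1.mul ((hderiv s hs).sub (h2.const_mul K))).congr_deriv ?_
    simp only [Pi.sub_apply]
    rw [← hKB]
    ring
  have hanti : AntitoneOn
      (fun s => Real.exp (-c * s) * (E s - K * Real.exp (-β * (N - s)))) (Set.Icc 0 N) := by
    apply antitoneOn_of_deriv_nonpos (convex_Icc 0 N)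
    · fun_prop
    · rw [interior_Icc]
      exact fun s hs => (hg s hs).differentiableAt.differentiableWithinAt
    · rw [interior_Icc]
      intro s hs
      rw [(hg s hs).deriv]
      have := hineq s hs
      exact mul_nonpos_of_nonneg_of_nonpos (Real.exp_pos _).le (by linarith)
  have h := hanti (Set.left_mem_Icc.mpr hN.le) ht ht.1
  simp only [hE0, mul_zero, Real.exp_zero, one_mul, zero_sub] at h
  have h0 : 0 ≤ K * Real.exp (-β * (N - 0)) := by positivity
  have h3 : Real.exp (-c * t) * (E t - K * Real.exp (-β * (N - t))) ≤ 0 := by linarith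
  have h4 := nonpos_of_mul_nonpos_right h3 (Real.exp_pos _)
  linarith
end

section
/- Let f : ℝ → ℝ be three times continuously differentiable with f(0) = 0 and f'(0) = 0. Define G : ℝ² → ℝ by G(x,y) := (f(x+y) − f(x) − f(y))/(xy) when x ≠ 0 and y ≠ 0; G(0,y) := f'(y)/y when y ≠ 0; G(x,0) := f'(x)/x when x ≠ 0; and G(0,0) := f''(0). Then G is Lipschitz continuous on every bounded subset of ℝ². -/
/-- The second divided difference `(f(x+y) − f(x) − f(y))/(xy)`, extended by its
limiting values where `x` or `y` vanishes (using `f(0) = f'(0) = 0`). -/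
noncomputable def secondDividedDiff (f : ℝ → ℝ) (p : ℝ × ℝ) : ℝ :=
  if p.1 = 0 then
    if p.2 = 0 then deriv (deriv f) 0 else deriv f p.2 / p.2
  else if p.2 = 0 then deriv f p.1 / p.1
  else (f (p.1 + p.2) - f p.1 - f p.2) / (p.1 * p.2)

open intervalIntegral in
/-- Integral of a derivative along a segment. -/
theorem mul_integral_deriv_segment (h : ℝ → ℝ) (hh : ContDiff ℝ 1 h) (c d : ℝ) :
    c * ∫ t in (0:ℝ)..1, deriv h (c * t + d) = h (c + d) - h d := by
  have hc : Continuous (deriv h) := hh.continuous_deriv le_rfl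
  rw [intervalIntegral.mul_integral_comp_mul_add (f := deriv h)]
  rw [intervalIntegral.integral_deriv_eq_sub
    (fun x _ => (hh.differentiable one_ne_zero) x) (hc.intervalIntegrable _ _)]
  simp

/-- Double integral representation. -/
theorem secondDividedDiff_eq_integral (f : ℝ → ℝ) (hf : ContDiff ℝ 3 f) (hf0 : f 0 = 0)
    (hf'0 : deriv f 0 = 0) (p : ℝ × ℝ) :
    secondDividedDiff f p =
      ∫ t in (0:ℝ)..1, ∫ s in (0:ℝ)..1, deriv (deriv f) (p.1 * s + p.2 * t) := by
  obtain ⟨x, y⟩ := p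
  have h1 : ContDiff ℝ 1 f := hf.of_le (by norm_num)
  have h2 : ContDiff ℝ 2 (deriv f) :=
    ((contDiff_succ_iff_deriv (n := 2)).1 (by simpa using (by norm_num : (2:WithTop ℕ∞) + 1 = 3) ▸ hf)).2.2
  have h2' : ContDiff ℝ 1 (deriv f) := h2.of_le (by norm_num)
  have hc : Continuous (deriv f) := h2.continuous
  have A := mul_integral_deriv_segment f h1
  have B := mul_integral_deriv_segment (deriv f) h2'
  unfold secondDividedDiff
  by_cases hx : x = 0
  · by_cases hy : y = 0
    · simp [hx, hy]
    · have := B y 0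
      simp only [add_zero, hf'0, sub_zero] at this
      simp only [hx, hy, if_true, if_false, zero_mul, zero_add]
      rw [div_eq_iff hy, ← this]
      simp [mul_comm]
  · by_cases hy : y = 0
    · have := B x 0
      simp only [add_zero, hf'0, sub_zero] at this
      simp only [hx, hy, if_true, if_false, zero_mul, add_zero]
      rw [div_eq_iff hx, ← this]
      simp [mul_comm]
    · simp only [hx, hy, if_false]
      rw [div_eq_iff (mul_ne_zero hx hy)]
      have e : (∫ t in (0:ℝ)..1, ∫ s in (0:ℝ)..1, deriv (deriv f) (x * s + y * t)) * (x * y)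
          = y * ∫ t in (0:ℝ)..1, (deriv f (y * t + x) - deriv f (y * t + 0)) := by
        rw [mul_comm x y, mul_comm, mul_assoc, ← intervalIntegral.integral_const_mul]
        congr 2
        ext t
        rw [B, add_zero, add_comm]
      rw [e, intervalIntegral.integral_sub
        ((by fun_prop : Continuous _).intervalIntegrable _ _)
        ((by fun_prop : Continuous _).intervalIntegrable _ _), mul_sub, A, A]
      simp only [add_zero, hf0, add_comm y x]
      ring

theorem secondDividedDiff_lipschitzOn_bounded
    (f : ℝ → ℝ) (hf : ContDiff ℝ 3 f) (hf0 : f 0 = 0) (hf'0 : deriv f 0 = 0)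
    (s : Set (ℝ × ℝ)) (hs : Bornology.IsBounded s) :
    ∃ K : NNReal, LipschitzOnWith K (secondDividedDiff f) s := by
  have h2 : ContDiff ℝ 2 (deriv f) :=
    ((contDiff_succ_iff_deriv (n := 2)).1 (by simpa using (by norm_num : (2:WithTop ℕ∞) + 1 = 3) ▸ hf)).2.2
  have h3 : ContDiff ℝ 1 (deriv (deriv f)) :=
    ((contDiff_succ_iff_deriv (n := 1)).1 (by simpa using (by norm_num : (1:WithTop ℕ∞) + 1 = 2) ▸ h2)).2.2
  set g := deriv (deriv f) with hg
  have hgc : Continuous g := h3.continuous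
  obtain ⟨R, hR⟩ := hs.exists_norm_le
  obtain ⟨C, hC⟩ := (isCompact_Icc (a := -(2*R)) (b := 2*R)).exists_bound_of_continuousOn
    (h3.continuous_deriv le_rfl).continuousOn
  have key : ∀ u ∈ Set.Icc (-(2*R)) (2*R), ∀ v ∈ Set.Icc (-(2*R)) (2*R),
      |g u - g v| ≤ |C| * |u - v| := fun u hu v hv =>
    (convex_Icc _ _).norm_image_sub_le_of_norm_deriv_le
      (fun x _ => (h3.differentiable one_ne_zero) x)
      (fun x hx => (hC x hx).trans (le_abs_self C)) hv hu
  have mem : ∀ p ∈ s, ∀ a ∈ Set.Icc (0:ℝ) 1, ∀ b ∈ Set.Icc (0:ℝ) 1,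
      p.1 * a + p.2 * b ∈ Set.Icc (-(2*R)) (2*R) := by
    intro p hp a ha b hb
    have h1 : |p.1| ≤ R := (norm_fst_le p).trans (hR p hp)
    have h2 : |p.2| ≤ R := (norm_snd_le p).trans (hR p hp)
    rw [Set.mem_Icc, ← abs_le]
    calc |p.1 * a + p.2 * b| ≤ |p.1 * a| + |p.2 * b| := abs_add_le _ _
      _ = |p.1| * a + |p.2| * b := by rw [abs_mul, abs_mul, abs_of_nonneg ha.1, abs_of_nonneg hb.1]
      _ ≤ 2 * R := by nlinarith [abs_nonneg p.1, abs_nonneg p.2, ha.1, ha.2, hb.1, hb.2]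
  have cin : ∀ (p : ℝ × ℝ), Continuous fun t : ℝ => ∫ s in (0:ℝ)..1, g (p.1 * s + p.2 * t) :=
    fun p => intervalIntegral.continuous_parametric_intervalIntegral_of_continuous'
      (by simp only [Function.uncurry_def]; fun_prop) 0 1
  refine ⟨⟨2 * |C|, by positivity⟩, LipschitzOnWith.of_dist_le_mul fun p hp q hq => ?_⟩
  rw [secondDividedDiff_eq_integral f hf hf0 hf'0, secondDividedDiff_eq_integral f hf hf0 hf'0,
    Real.dist_eq, ← intervalIntegral.integral_sub ((cin p).intervalIntegrable _ _)
      ((cin q).intervalIntegrable _ _)]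
  change _ ≤ 2 * |C| * dist p q
  have I01 : ∀ t ∈ Set.uIoc (0:ℝ) 1, t ∈ Set.Icc (0:ℝ) 1 := fun t ht => by
    rw [Set.uIoc_of_le zero_le_one] at ht; exact ⟨ht.1.le, ht.2⟩
  have main := intervalIntegral.norm_integral_le_of_norm_le_const (a := 0) (b := 1)
    (C := 2 * |C| * dist p q)
    (f := fun t => (∫ s in (0:ℝ)..1, g (p.1 * s + p.2 * t)) - ∫ s in (0:ℝ)..1, g (q.1 * s + q.2 * t))
    (fun t ht => ?_)
  · simpa using main
  · rw [← intervalIntegral.integral_sub ((by fun_prop : Continuous _).intervalIntegrable _ _)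
        ((by fun_prop : Continuous _).intervalIntegrable _ _)]
    have inner := intervalIntegral.norm_integral_le_of_norm_le_const (a := 0) (b := 1)
      (C := 2 * |C| * dist p q)
      (f := fun s => g (p.1 * s + p.2 * t) - g (q.1 * s + q.2 * t)) (fun a ha => ?_)
    · simpa using inner
    · have ha := I01 a ha
      have ht := I01 t ht
      refine (key _ (mem p hp a ha t ht) _ (mem q hq a ha t ht)).trans ?_
      have e1 : |p.1 - q.1| ≤ dist p q := by
        rw [← Real.dist_eq, Prod.dist_eq]; exact le_max_left _ _
      have e2 : |p.2 - q.2| ≤ dist p q := by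
        rw [← Real.dist_eq, Prod.dist_eq]; exact le_max_right _ _
      have : |p.1 * a + p.2 * t - (q.1 * a + q.2 * t)| ≤ 2 * dist p q := by
        calc _ = |(p.1 - q.1) * a + (p.2 - q.2) * t| := by congr 1; ring
          _ ≤ |(p.1 - q.1) * a| + |(p.2 - q.2) * t| := abs_add_le _ _
          _ = |p.1 - q.1| * a + |p.2 - q.2| * t := by
            rw [abs_mul, abs_mul, abs_of_nonneg ha.1, abs_of_nonneg ht.1]
          _ ≤ _ := by
            nlinarith [abs_nonneg (p.1 - q.1), abs_nonneg (p.2 - q.2), ha.1, ha.2, ht.1, ht.2]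
      calc _ ≤ |C| * (2 * dist p q) := by gcongr
        _ = _ := by ring
end

section
/- Let f : ℝ → ℝ be twice continuously differentiable with f(0) = 0 and f'(0) = 0. Define G : ℝ² → ℝ by G(x,y) := (f(x+y) − f(x) − f(y))/(xy) when x ≠ 0 and y ≠ 0; G(0,y) := f'(y)/y when y ≠ 0; G(x,0) := f'(x)/x when x ≠ 0; and G(0,0) := f''(0). Then G is continuous on ℝ², and for all (x,y) ∈ ℝ², |G(x,y)| ≤ sup_{|u| ≤ |x|+|y|} |f''(u)|. -/
theorem aux_mul_integral (g : ℝ → ℝ) (hg : ContDiff ℝ 1 g) (d c : ℝ) :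
    c * ∫ t in (0:ℝ)..1, deriv g (d + c * t) = g (d + c) - g d := by
  rw [intervalIntegral.mul_integral_comp_add_mul]
  rw [intervalIntegral.integral_deriv_eq_sub]
  · simp
  · intro x _
    exact (hg.differentiable (by norm_num)) x
  · exact (hg.continuous_deriv (by norm_num)).intervalIntegrable _ _

theorem aux_repr (f : ℝ → ℝ) (hf : ContDiff ℝ 2 f) (hf0 : f 0 = 0) (hf'0 : deriv f 0 = 0)
    (p : ℝ × ℝ) : secondDividedDiff f p =
      ∫ s in (0:ℝ)..1, ∫ t in (0:ℝ)..1, deriv (deriv f) (p.1 * s + p.2 * t) := by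
  obtain ⟨x, y⟩ := p
  have h1 : ContDiff ℝ 1 (deriv f) := by
    have : ContDiff ℝ (1 + 1) f := by simpa [one_add_one_eq_two] using hf
    exact (contDiff_succ_iff_deriv.1 this).2.2
  have hf1 : ContDiff ℝ 1 f := hf.of_le (by norm_num)
  have hc : Continuous (deriv f) := h1.continuous
  simp only [secondDividedDiff]
  split_ifs with hx hy hy
  · subst hx hy; simp
  · subst hx
    have := aux_mul_integral _ h1 0 y
    simp only [zero_add, hf'0, sub_zero] at this
    simp only [zero_mul, zero_add, intervalIntegral.integral_const, sub_zero, one_smul]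
    rw [← this]; field_simp
  · subst hy
    have := aux_mul_integral _ h1 0 x
    simp only [zero_add, hf'0, sub_zero] at this
    simp only [zero_mul, add_zero, intervalIntegral.integral_const, sub_zero, one_smul]
    rw [← this]; field_simp
  · rw [div_eq_iff (mul_ne_zero hx hy)]
    have e : y * (∫ s in (0:ℝ)..1, ∫ t in (0:ℝ)..1, deriv (deriv f) (x * s + y * t)) =
        (∫ s in (0:ℝ)..1, deriv f (y + x * s)) - ∫ s in (0:ℝ)..1, deriv f (0 + x * s) := by
      rw [← intervalIntegral.integral_const_mul, ← intervalIntegral.integral_sub]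
      · congr 1
        funext s
        rw [aux_mul_integral _ h1, zero_add, add_comm y]
      · exact Continuous.intervalIntegrable (by fun_prop) _ _
      · exact Continuous.intervalIntegrable (by fun_prop) _ _
    have e1 := aux_mul_integral f hf1 y x
    have e2 := aux_mul_integral f hf1 0 x
    rw [zero_add, hf0] at e2
    rw [add_comm y x] at e1
    linear_combination (-x) * e - e1 + e2

/-- If `f` is twice continuously differentiable with `f(0) = 0` and `f'(0) = 0`, then
the extended second divided difference `G` is continuous on `ℝ²` and satisfies
`|G(x,y)| ≤ sup_{|u| ≤ |x|+|y|} |f''(u)|`. -/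
theorem secondDividedDiff_continuous_and_bound
    (f : ℝ → ℝ) (hf : ContDiff ℝ 2 f) (hf0 : f 0 = 0) (hf'0 : deriv f 0 = 0) :
    Continuous (secondDividedDiff f) ∧
    ∀ x y : ℝ, |secondDividedDiff f (x, y)|
      ≤ sSup ((fun u => |deriv (deriv f) u|) '' Set.Icc (-(|x| + |y|)) (|x| + |y|)) := by
  have hc : Continuous (deriv (deriv f)) := by
    have : ContDiff ℝ (1 + 1) f := by simpa [one_add_one_eq_two] using hf
    exact (contDiff_succ_iff_deriv.1 this).2.2.continuous_deriv (by norm_num)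
  constructor
  · rw [show secondDividedDiff f = _ from funext (aux_repr f hf hf0 hf'0)]
    apply intervalIntegral.continuous_parametric_intervalIntegral_of_continuous'
    apply intervalIntegral.continuous_parametric_intervalIntegral_of_continuous'
    simp only [Function.uncurry_def]
    fun_prop
  · intro x y
    rw [aux_repr f hf hf0 hf'0]
    have key : ∀ s ∈ Set.uIoc (0:ℝ) 1, ∀ t ∈ Set.uIoc (0:ℝ) 1,
        ‖deriv (deriv f) (x * s + y * t)‖ ≤
        sSup ((fun u => |deriv (deriv f) u|) '' Set.Icc (-(|x| + |y|)) (|x| + |y|)) := by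
      intro s hs t ht
      rw [Set.uIoc_of_le zero_le_one] at hs ht
      apply le_csSup
      · exact (isCompact_Icc.image (by fun_prop)).bddAbove
      · refine ⟨x * s + y * t, ?_, rfl⟩
        refine abs_le.1 ?_
        calc |x * s + y * t| ≤ |x * s| + |y * t| := abs_add_le _ _
          _ = |x| * s + |y| * t := by
            rw [abs_mul, abs_mul, abs_of_pos hs.1, abs_of_pos ht.1]
          _ ≤ |x| + |y| := by
            nlinarith [abs_nonneg x, abs_nonneg y, hs.2, ht.2]
    have := intervalIntegral.norm_integral_le_of_norm_le_const (fun s hs =>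
      intervalIntegral.norm_integral_le_of_norm_le_const (key s hs))
    simpa using this
end

section
/- Let a ∈ (0,1], and let x, y : ℤ → ℝ be sequences with ‖x‖_a < ∞ and ‖y‖_a < ∞. Then ⟨x, (S−I)y⟩_a + ⟨y, (I−S⁻¹)x⟩_a = (1 − e^{2a})·⟨x, Sy⟩_a, and consequently |⟨x, (S−I)y⟩_a + ⟨y, (I−S⁻¹)x⟩_a| ≤ 2·sinh(a)·‖x‖_a·‖y‖_a ≤ 4a·‖x‖_a·‖y‖_a. -/
theorem cs_aux (u v : ℤ → ℝ) (hu : Summable fun j => u j ^ 2) (hv : Summable fun j => v j ^ 2) :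
    Summable (fun j => u j * v j) ∧
      |∑' j, u j * v j| ≤ Real.sqrt (∑' j, u j ^ 2) * Real.sqrt (∑' j, v j ^ 2) := by
  have hs : Summable (fun j => |u j * v j|) := by
    refine Summable.of_nonneg_of_le (fun j => abs_nonneg _) (fun j => ?_) (hu.add hv)
    rw [abs_le]
    constructor <;> nlinarith [sq_nonneg (u j - v j), sq_nonneg (u j + v j), sq_nonneg (u j), sq_nonneg (v j)]
  refine ⟨hs.of_abs, ?_⟩
  have h1 : |∑' j, u j * v j| ≤ ∑' j, |u j * v j| := by
    have := norm_tsum_le_tsum_norm (f := fun j => u j * v j) (by simpa only [Real.norm_eq_abs] using hs)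
    simpa only [Real.norm_eq_abs] using this
  refine h1.trans (hs.tsum_le_of_sum_le fun s => ?_)
  have h2 := Real.sum_mul_le_sqrt_mul_sqrt s (fun j => |u j|) (fun j => |v j|)
  simp only [sq_abs] at h2
  simp only [abs_mul]
  refine h2.trans ?_
  gcongr
  · exact hu.sum_le_tsum s (fun j _ => sq_nonneg _)
  · exact hv.sum_le_tsum s (fun j _ => sq_nonneg _)

/-- In the weighted inner product `⟨x,y⟩_a = Σ_j e^{2aj} x_j y_j` with `a ∈ (0,1]`,
the skew-symmetrized pairing of the shift operators picks up a commutator term: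
`⟨x,(S−I)y⟩_a + ⟨y,(I−S⁻¹)x⟩_a = (1 − e^{2a}) ⟨x, Sy⟩_a`, which is bounded by
`2 sinh(a) ‖x‖_a ‖y‖_a ≤ 4a ‖x‖_a ‖y‖_a`. -/
theorem weighted_shift_pairing_commutator
    (a : ℝ) (ha : a ∈ Set.Ioc (0 : ℝ) 1) (x y : ℤ → ℝ)
    (hx : Summable fun j : ℤ => Real.exp (2 * a * (j : ℝ)) * (x j) ^ 2)
    (hy : Summable fun j : ℤ => Real.exp (2 * a * (j : ℝ)) * (y j) ^ 2) :
    (∑' j : ℤ, Real.exp (2 * a * (j : ℝ)) * (x j * (y (j + 1) - y j)))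
        + (∑' j : ℤ, Real.exp (2 * a * (j : ℝ)) * (y j * (x j - x (j - 1))))
      = (1 - Real.exp (2 * a)) * ∑' j : ℤ, Real.exp (2 * a * (j : ℝ)) * (x j * y (j + 1)) ∧
    |(∑' j : ℤ, Real.exp (2 * a * (j : ℝ)) * (x j * (y (j + 1) - y j)))
        + (∑' j : ℤ, Real.exp (2 * a * (j : ℝ)) * (y j * (x j - x (j - 1))))|
      ≤ 2 * Real.sinh a * Real.sqrt (∑' j : ℤ, Real.exp (2 * a * (j : ℝ)) * (x j) ^ 2)
          * Real.sqrt (∑' j : ℤ, Real.exp (2 * a * (j : ℝ)) * (y j) ^ 2) ∧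
    2 * Real.sinh a * Real.sqrt (∑' j : ℤ, Real.exp (2 * a * (j : ℝ)) * (x j) ^ 2)
          * Real.sqrt (∑' j : ℤ, Real.exp (2 * a * (j : ℝ)) * (y j) ^ 2)
      ≤ 4 * a * Real.sqrt (∑' j : ℤ, Real.exp (2 * a * (j : ℝ)) * (x j) ^ 2)
          * Real.sqrt (∑' j : ℤ, Real.exp (2 * a * (j : ℝ)) * (y j) ^ 2) := by
  obtain ⟨ha0, ha1⟩ := ha
  set X := ∑' j : ℤ, Real.exp (2 * a * (j : ℝ)) * (x j) ^ 2 with hX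
  set Y := ∑' j : ℤ, Real.exp (2 * a * (j : ℝ)) * (y j) ^ 2 with hY
  have hsq : ∀ t : ℝ, Real.exp (2 * a * t) = Real.exp (a * t) * Real.exp (a * t) := by
    intro t
    rw [← Real.exp_add]
    ring_nf
  have eu : ∀ z : ℤ → ℝ, (fun j : ℤ => Real.exp (2 * a * (j : ℝ)) * (z j) ^ 2)
      = fun j : ℤ => (Real.exp (a * (j : ℝ)) * z j) ^ 2 := by
    intro z
    funext j
    rw [hsq]
    ring
  rw [eu] at hx hy hX hY
  have hv' : Summable fun j : ℤ => (Real.exp (a * ((j + 1 : ℤ) : ℝ)) * y (j + 1)) ^ 2 :=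
    (Equiv.addRight (1 : ℤ)).summable_iff.mpr hy
  have hY' : ∑' j : ℤ, (Real.exp (a * ((j + 1 : ℤ) : ℝ)) * y (j + 1)) ^ 2 = Y := by
    rw [hY]
    exact (Equiv.addRight (1 : ℤ)).tsum_eq (fun j : ℤ => (Real.exp (a * (j : ℝ)) * y j) ^ 2)
  obtain ⟨s0, -⟩ := cs_aux _ _ hx hy
  obtain ⟨s1, b1⟩ := cs_aux _ _ hx hv'
  rw [hY', ← hX] at b1
  have e0 : (fun j : ℤ => Real.exp (a * (j : ℝ)) * x j * (Real.exp (a * (j : ℝ)) * y j))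
      = fun j : ℤ => Real.exp (2 * a * (j : ℝ)) * (x j * y j) := by
    funext j
    rw [hsq]
    ring
  have e1 : (fun j : ℤ => Real.exp (a * (j : ℝ)) * x j * (Real.exp (a * ((j + 1 : ℤ) : ℝ)) * y (j + 1)))
      = fun j : ℤ => Real.exp a * (Real.exp (2 * a * (j : ℝ)) * (x j * y (j + 1))) := by
    funext j
    rw [hsq]
    push_cast
    rw [mul_add, mul_one, Real.exp_add]
    ring
  rw [e0] at s0
  rw [e1] at s1 b1
  have s2 : Summable fun j : ℤ => Real.exp (2 * a * (j : ℝ)) * (x j * y (j + 1)) :=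
    (summable_mul_left_iff (Real.exp_pos a).ne').mp s1
  rw [tsum_mul_left] at b1
  have e3 : (fun j : ℤ => Real.exp (2 * a * ((j + 1 : ℤ) : ℝ)) * (y (j + 1) * x (j + 1 - 1)))
      = fun j : ℤ => Real.exp (2 * a) * (Real.exp (2 * a * (j : ℝ)) * (x j * y (j + 1))) := by
    funext j
    push_cast
    rw [mul_add, mul_one, Real.exp_add, add_sub_cancel_right]
    ring
  have s3 : Summable fun j : ℤ => Real.exp (2 * a * (j : ℝ)) * (y j * x (j - 1)) := by
    refine (Equiv.addRight (1 : ℤ)).summable_iff.mp ?_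
    change Summable fun j : ℤ => Real.exp (2 * a * ((j + 1 : ℤ) : ℝ)) * (y (j + 1) * x (j + 1 - 1))
    rw [e3]
    exact s2.mul_left _
  have t3 : ∑' j : ℤ, Real.exp (2 * a * (j : ℝ)) * (y j * x (j - 1))
      = Real.exp (2 * a) * ∑' j : ℤ, Real.exp (2 * a * (j : ℝ)) * (x j * y (j + 1)) := by
    rw [← tsum_mul_left, ← e3]
    exact ((Equiv.addRight (1 : ℤ)).tsum_eq
      (fun j : ℤ => Real.exp (2 * a * (j : ℝ)) * (y j * x (j - 1)))).symm
  have main : (∑' j : ℤ, Real.exp (2 * a * (j : ℝ)) * (x j * (y (j + 1) - y j)))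
        + (∑' j : ℤ, Real.exp (2 * a * (j : ℝ)) * (y j * (x j - x (j - 1))))
      = (1 - Real.exp (2 * a)) * ∑' j : ℤ, Real.exp (2 * a * (j : ℝ)) * (x j * y (j + 1)) := by
    have c1 : (fun j : ℤ => Real.exp (2 * a * (j : ℝ)) * (x j * (y (j + 1) - y j)))
        = fun j : ℤ => Real.exp (2 * a * (j : ℝ)) * (x j * y (j + 1))
          - Real.exp (2 * a * (j : ℝ)) * (x j * y j) := by
      funext j
      ring
    have c2 : (fun j : ℤ => Real.exp (2 * a * (j : ℝ)) * (y j * (x j - x (j - 1))))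
        = fun j : ℤ => Real.exp (2 * a * (j : ℝ)) * (x j * y j)
          - Real.exp (2 * a * (j : ℝ)) * (y j * x (j - 1)) := by
      funext j
      ring
    rw [c1, c2, s2.tsum_sub s0, s0.tsum_sub s3, t3]
    ring
  refine ⟨main, ?_, ?_⟩
  · rw [main]
    set T := ∑' j : ℤ, Real.exp (2 * a * (j : ℝ)) * (x j * y (j + 1))
    have hE : 1 - Real.exp (2 * a) = -(2 * Real.sinh a) * Real.exp a := by
      have h1 : Real.exp (-a) * Real.exp a = 1 := by
        rw [← Real.exp_add]
        simp
      have h2 := hsq 1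
      simp only [mul_one] at h2
      rw [Real.sinh_eq, h2]
      linear_combination -h1
    have hsh : 0 ≤ 2 * Real.sinh a := by
      have := Real.sinh_nonneg_iff.mpr ha0.le
      linarith
    rw [hE, mul_assoc, abs_mul, abs_neg, abs_of_nonneg hsh, mul_assoc (2 * Real.sinh a)]
    exact mul_le_mul_of_nonneg_left b1 hsh
  · have hs : 2 * Real.sinh a ≤ 4 * a := by
      have h1 := Real.abs_exp_sub_one_sub_id_le (x := a) (by rw [abs_of_pos ha0]; exact ha1)
      have h2 := Real.add_one_le_exp (-a)
      have h3 := (abs_le.mp h1).2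
      rw [Real.sinh_eq]
      nlinarith
    gcongr
end

section
/- There is an absolute constant C > 0 such that for every a ∈ (0,1], every c with 0 ≤ c ≤ a, and all real numbers p ≤ q, one has Σ_{j∈ℤ} e^{2c(j−q)} e^{−2a|j−p|} e^{−2a|j−q|} ≤ C·((q−p) + 1/a)·e^{−2a(q−p)}, and likewise Σ_{j∈ℤ} e^{−2c(j−p)} e^{−2a|j−p|} e^{−2a|j−q|} ≤ C·((q−p) + 1/a)·e^{−2a(q−p)}. -/
/-- Majorant: `1` on `[A, B]` and geometric tails outside. -/
noncomputable def ovMaj (r : ℝ) (A B : ℤ) (j : ℤ) : ℝ :=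
  (if j ∈ Finset.Icc A B then 1 else 0) + (if B < j then r ^ (j - B - 1).toNat else 0)
    + (if j < A then r ^ (A - 1 - j).toNat else 0)

lemma ovMaj_hasSum (r : ℝ) (h0 : 0 ≤ r) (h1 : r < 1) (A B : ℤ) :
    HasSum (ovMaj r A B) (((B + 1 - A).toNat : ℝ) + (1 - r)⁻¹ + (1 - r)⁻¹) := by
  have hg := hasSum_geometric_of_lt_one h0 h1
  refine HasSum.add (HasSum.add ?_ ?_) ?_
  · have := hasSum_sum_of_ne_finset_zero (f := fun j : ℤ => if j ∈ Finset.Icc A B then (1 : ℝ) else 0)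
      (s := Finset.Icc A B) (L := SummationFilter.unconditional ℤ) (by intro b hb; simp only [hb, if_false])
    convert this using 1
    rw [Finset.sum_ite_mem, Finset.inter_self]
    simp
  · have hi : Function.Injective (fun n : ℕ => B + 1 + (n : ℤ)) := by
      intro m n h; simpa using h
    rw [← hi.hasSum_iff]
    · convert hg using 1
      funext n
      have e : (B + 1 + (n : ℤ) - B - 1).toNat = n := by omega
      have e2 : B < B + 1 + (n : ℤ) := by omega
      simp only [Function.comp, e, e2, if_true]
    · intro x hx
      rw [if_neg]
      intro h
      exact hx ⟨(x - B - 1).toNat, by simp only; omega⟩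
  · have hi : Function.Injective (fun n : ℕ => A - 1 - (n : ℤ)) := by
      intro m n h; simpa using h
    rw [← hi.hasSum_iff]
    · convert hg using 1
      funext n
      have e : (A - 1 - (A - 1 - (n : ℤ))).toNat = n := by omega
      have e2 : A - 1 - (n : ℤ) < A := by omega
      simp only [Function.comp, e, e2, if_true]
    · intro x hx
      rw [if_neg]
      intro h
      exact hx ⟨(A - 1 - x).toNat, by simp only; omega⟩

lemma ovMaj_ge (a p q : ℝ) (ha : 0 < a) (j : ℤ) (t : ℝ)
    (h1 : t ≤ 0) (h2 : q < j → t ≤ -2 * a * (j - q)) (h3 : (j : ℝ) < p → t ≤ -2 * a * (p - j)) :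
    Real.exp t ≤ ovMaj (Real.exp (-2 * a)) ⌈p⌉ ⌊q⌋ j := by
  have hr : 0 < Real.exp (-2 * a) := Real.exp_pos _
  have n2 : 0 ≤ (if ⌊q⌋ < j then Real.exp (-2 * a) ^ (j - ⌊q⌋ - 1).toNat else 0) := by
    split_ifs <;> positivity
  have n3 : 0 ≤ (if j < ⌈p⌉ then Real.exp (-2 * a) ^ (⌈p⌉ - 1 - j).toNat else 0) := by
    split_ifs <;> positivity
  have n1 : (0 : ℝ) ≤ (if j ∈ Finset.Icc ⌈p⌉ ⌊q⌋ then 1 else 0) := by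
    split_ifs <;> positivity
  unfold ovMaj
  by_cases c2 : ⌊q⌋ < j
  · have hq : q < j := Int.floor_lt.mp c2
    have : Real.exp t ≤ (if ⌊q⌋ < j then Real.exp (-2 * a) ^ (j - ⌊q⌋ - 1).toNat else 0) := by
      rw [if_pos c2, ← Real.exp_nat_mul]
      apply Real.exp_le_exp.mpr
      have e : (((j - ⌊q⌋ - 1).toNat : ℕ) : ℝ) = j - ⌊q⌋ - 1 := by
        have : (((j - ⌊q⌋ - 1).toNat : ℕ) : ℤ) = j - ⌊q⌋ - 1 := by omega
        exact_mod_cast this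
      rw [e]
      have := h2 hq
      have := Int.lt_floor_add_one q
      nlinarith
    linarith
  · by_cases c3 : j < ⌈p⌉
    · have hp : (j : ℝ) < p := Int.lt_ceil.mp c3
      have : Real.exp t ≤ (if j < ⌈p⌉ then Real.exp (-2 * a) ^ (⌈p⌉ - 1 - j).toNat else 0) := by
        rw [if_pos c3, ← Real.exp_nat_mul]
        apply Real.exp_le_exp.mpr
        have e : (((⌈p⌉ - 1 - j).toNat : ℕ) : ℝ) = ⌈p⌉ - 1 - j := by
          have : (((⌈p⌉ - 1 - j).toNat : ℕ) : ℤ) = ⌈p⌉ - 1 - j := by omega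
          exact_mod_cast this
        rw [e]
        have := h3 hp
        have := Int.ceil_lt_add_one p
        nlinarith
      linarith
    · have : Real.exp t ≤ (if j ∈ Finset.Icc ⌈p⌉ ⌊q⌋ then 1 else 0) := by
        rw [if_pos (Finset.mem_Icc.mpr ⟨by omega, by omega⟩)]
        exact Real.exp_le_one_iff.mpr h1
      linarith

lemma ov_main (a p q : ℝ) (ha : 0 < a) (ha1 : a ≤ 1) (hpq : p ≤ q) (f : ℤ → ℝ) (t : ℤ → ℝ)
    (hf : ∀ j, f j = Real.exp (t j + -2 * a * (q - p)))
    (h1 : ∀ j, t j ≤ 0) (h2 : ∀ j : ℤ, q < j → t j ≤ -2 * a * (j - q))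
    (h3 : ∀ j : ℤ, (j : ℝ) < p → t j ≤ -2 * a * (p - j)) :
    ∑' j, f j ≤ 4 * ((q - p) + 1 / a) * Real.exp (-2 * a * (q - p)) := by
  have hr1 : Real.exp (-2 * a) < 1 := by rw [Real.exp_lt_one_iff]; linarith
  have hs := (ovMaj_hasSum (Real.exp (-2 * a)) (Real.exp_pos _).le hr1 ⌈p⌉ ⌊q⌋).mul_right
    (Real.exp (-2 * a * (q - p)))
  have hle : ∀ j, f j ≤ ovMaj (Real.exp (-2 * a)) ⌈p⌉ ⌊q⌋ j * Real.exp (-2 * a * (q - p)) := by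
    intro j
    rw [hf, Real.exp_add]
    exact mul_le_mul_of_nonneg_right (ovMaj_ge a p q ha j (t j) (h1 j) (h2 j) (h3 j))
      (Real.exp_pos _).le
  have hsf : Summable f := Summable.of_nonneg_of_le
    (fun j => by rw [hf]; exact (Real.exp_pos _).le) hle hs.summable
  refine (hasSum_le hle hsf.hasSum hs).trans ?_
  refine mul_le_mul_of_nonneg_right ?_ (Real.exp_pos _).le
  have hinv : (1 - Real.exp (-2 * a))⁻¹ ≤ 3 / (2 * a) := by
    have hx : 1 + 2 * a ≤ Real.exp (2 * a) := by linarith [Real.add_one_le_exp (2 * a)]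
    have hm : Real.exp (-2 * a) * Real.exp (2 * a) = 1 := by
      rw [← Real.exp_add]; simp
    have hp := Real.exp_pos (-2 * a)
    rw [inv_le_comm₀ (by linarith) (by positivity), inv_div]
    have hk : Real.exp (-2 * a) * (1 + 2 * a) ≤ 1 := by
      exact (mul_le_mul_of_nonneg_left hx hp.le).trans hm.le
    nlinarith
  have hcard : ((⌊q⌋ + 1 - ⌈p⌉).toNat : ℝ) ≤ q - p + 1 := by
    have e : (((⌊q⌋ + 1 - ⌈p⌉).toNat : ℕ) : ℝ) = max ((⌊q⌋ : ℝ) + 1 - ⌈p⌉) 0 := by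
      have : (((⌊q⌋ + 1 - ⌈p⌉).toNat : ℕ) : ℤ) = max (⌊q⌋ + 1 - ⌈p⌉) 0 := by omega
      exact_mod_cast this
    rw [e]
    apply max_le
    · linarith [Int.floor_le q, Int.le_ceil p]
    · linarith
  have h1a : 1 ≤ 1 / a := by rw [le_div_iff₀ ha]; linarith
  have h3a : 3 / (2 * a) = 3 / 2 * (1 / a) := by field_simp
  rw [h3a] at hinv
  linarith

/-- Weighted overlap estimate for two exponentially localized profiles centered at
`p ≤ q`, with exponential weights `e^{2c(j-q)}` (resp. `e^{-2c(j-p)}`) whose rate `c`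
does not exceed the localization rate `a`. -/
theorem weighted_exponential_overlap_estimate :
    ∃ C > (0 : ℝ), ∀ a ∈ Set.Ioc (0 : ℝ) 1, ∀ c : ℝ, 0 ≤ c → c ≤ a → ∀ p q : ℝ, p ≤ q →
      (∑' j : ℤ, Real.exp (2 * c * ((j : ℝ) - q)) *
          (Real.exp (-2 * a * |(j : ℝ) - p|) * Real.exp (-2 * a * |(j : ℝ) - q|)))
        ≤ C * ((q - p) + 1 / a) * Real.exp (-2 * a * (q - p)) ∧
      (∑' j : ℤ, Real.exp (-2 * c * ((j : ℝ) - p)) *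
          (Real.exp (-2 * a * |(j : ℝ) - p|) * Real.exp (-2 * a * |(j : ℝ) - q|)))
        ≤ C * ((q - p) + 1 / a) * Real.exp (-2 * a * (q - p)) := by
  refine ⟨4, by norm_num, ?_⟩
  rintro a ⟨ha, ha1⟩ c hc hca p q hpq
  constructor
  · refine ov_main a p q ha ha1 hpq _ (fun j : ℤ => 2 * c * ((j : ℝ) - q) +
      (-2 * a * |(j : ℝ) - p| + -2 * a * |(j : ℝ) - q|) + 2 * a * (q - p)) ?_ ?_ ?_ ?_
    · intro j
      rw [← Real.exp_add, ← Real.exp_add]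
      congr 1; ring
    · intro j
      rcases abs_cases ((j : ℝ) - p) with ⟨e, h⟩ | ⟨e, h⟩ <;>
      rcases abs_cases ((j : ℝ) - q) with ⟨e', h'⟩ | ⟨e', h'⟩ <;> simp only [e, e'] <;> nlinarith
    · intro j h
      rw [abs_of_pos (by linarith : (0 : ℝ) < j - p), abs_of_pos (by linarith : (0 : ℝ) < j - q)]
      nlinarith
    · intro j h
      rw [abs_of_neg (by linarith : (j : ℝ) - p < 0), abs_of_neg (by linarith : (j : ℝ) - q < 0)]
      nlinarith
  · refine ov_main a p q ha ha1 hpq _ (fun j : ℤ => -2 * c * ((j : ℝ) - p) +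
      (-2 * a * |(j : ℝ) - p| + -2 * a * |(j : ℝ) - q|) + 2 * a * (q - p)) ?_ ?_ ?_ ?_
    · intro j
      rw [← Real.exp_add, ← Real.exp_add]
      congr 1; ring
    · intro j
      rcases abs_cases ((j : ℝ) - p) with ⟨e, h⟩ | ⟨e, h⟩ <;>
      rcases abs_cases ((j : ℝ) - q) with ⟨e', h'⟩ | ⟨e', h'⟩ <;> simp only [e, e'] <;> nlinarith
    · intro j h
      rw [abs_of_pos (by linarith : (0 : ℝ) < j - p), abs_of_pos (by linarith : (0 : ℝ) < j - q)]
      nlinarith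
    · intro j h
      rw [abs_of_neg (by linarith : (j : ℝ) - p < 0), abs_of_neg (by linarith : (j : ℝ) - q < 0)]
      nlinarith
end

section
/- Let a > 0 and K > 0. There exist constants C > 0, b > 0, and ε₀ > 0, depending only on a and K, such that the following holds for all ε ∈ (0, ε₀). Let p₋ ≤ p₊ be real numbers and set d := p₊ − p₋. Let r, s : ℝ → ℝ satisfy |r(ξ)| ≤ Kε² e^{−aε|ξ|} and |s(ξ)| ≤ Kε³ e^{−aε|ξ|} for all ξ ∈ ℝ, and define the sequence y : ℤ → ℝ by y_j := r(j − p₊)·s(j − p₋). Then ‖y‖ + ‖y‖₊ + ‖y‖₋ ≤ C ε^{9/2} e^{−bεd}, where ‖y‖² := Σ_{j∈ℤ} y_j², ‖y‖₊² := Σ_{j∈ℤ} e^{2ε^{3/2}(j−p₊)} y_j², and ‖y‖₋² := Σ_{j∈ℤ} e^{−2ε^{3/2}(j−p₋)} y_j². -/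
lemma cross_sum_bound (c p : ℝ) (hc : 0 < c) (hc1 : c ≤ 1) :
    Summable (fun j : ℤ => Real.exp (-c * |(j : ℝ) - p|)) ∧
    ∑' j : ℤ, Real.exp (-c * |(j : ℝ) - p|) ≤ 4 * Real.exp 1 / c := by
  have hq1 : Real.exp (-c) < 1 := by rw [Real.exp_lt_one_iff]; linarith
  have hq0 := Real.exp_pos (-c)
  have hg := hasSum_geometric_of_lt_one hq0.le hq1
  have h1 : HasSum (fun n : ℕ => Real.exp (-c * |((n : ℤ) : ℝ)|)) (1 - Real.exp (-c))⁻¹ := by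
    refine hg.congr_fun ?_
    intro n
    rw [← Real.exp_nat_mul]
    congr 1
    simp
    ring
  have h2 : HasSum (fun n : ℕ => Real.exp (-c * |((-((n : ℤ) + 1) : ℤ) : ℝ)|))
      (Real.exp (-c) * (1 - Real.exp (-c))⁻¹) := by
    refine (hg.mul_left (Real.exp (-c))).congr_fun ?_
    intro n
    rw [← Real.exp_nat_mul, ← Real.exp_add]
    congr 1
    have : |((-((n : ℤ) + 1) : ℤ) : ℝ)| = n + 1 := by
      push_cast
      rw [abs_neg, abs_of_nonneg (by positivity)]
    rw [this]
    ring
  have h3 := HasSum.of_nat_of_neg_add_one (f := fun j : ℤ => Real.exp (-c * |(j : ℝ)|)) h1 h2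
  have h4 := ((Equiv.subRight ⌊p⌋).hasSum_iff).2 h3
  have h5 := h4.mul_left (Real.exp 1)
  have hle : ∀ j : ℤ, Real.exp (-c * |(j : ℝ) - p|) ≤
      Real.exp 1 * ((fun j : ℤ => Real.exp (-c * |(j : ℝ)|)) ∘ (Equiv.subRight ⌊p⌋)) j := by
    intro j
    simp only [Function.comp, Equiv.subRight_apply]
    rw [← Real.exp_add, Real.exp_le_exp]
    push_cast
    have e1 : |(j : ℝ) - ⌊p⌋| ≤ |(j : ℝ) - p| + |p - ⌊p⌋| := abs_sub_le _ _ _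
    have e2 : |p - ⌊p⌋| ≤ 1 := by
      rw [abs_le]; constructor <;> linarith [Int.floor_le p, Int.lt_floor_add_one p]
    nlinarith
  have hs := Summable.of_nonneg_of_le (fun j => (Real.exp_pos _).le) hle h5.summable
  refine ⟨hs, (hs.tsum_le_tsum hle h5.summable).trans ?_⟩
  rw [h5.tsum_eq]
  have hb : c / 2 ≤ 1 - Real.exp (-c) := by
    have : Real.exp (-c) ≤ 1 / (1 + c) := by
      rw [Real.exp_neg, one_div]
      exact inv_anti₀ (by linarith) (by linarith [Real.add_one_le_exp c])
    have h' : 1 / (1 + c) ≤ 1 - c / 2 := by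
      rw [div_le_iff₀ (by linarith)]; nlinarith
    linarith
  have hi : (1 - Real.exp (-c))⁻¹ ≤ 2 / c := by
    have := inv_anti₀ (by positivity) hb
    rwa [inv_div] at this
  have hi0 : 0 ≤ (1 - Real.exp (-c))⁻¹ := inv_nonneg.2 (by linarith)
  have : (1 - Real.exp (-c))⁻¹ + Real.exp (-c) * (1 - Real.exp (-c))⁻¹ ≤ 4 / c := by
    have : (4 : ℝ) / c = 2 / c + 2 / c := by ring
    nlinarith
  calc _ ≤ Real.exp 1 * (4 / c) := by gcongr
    _ = _ := by ring

lemma cross_weighted (a K ε pm pp : ℝ) (ha : 0 < a) (hK : 0 < K) (hε : 0 < ε)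
    (hε2 : a * ε / 2 ≤ 1) (hp : pm ≤ pp) (r s : ℝ → ℝ)
    (hr : ∀ ξ : ℝ, |r ξ| ≤ K * ε ^ 2 * Real.exp (-(a * ε) * |ξ|))
    (hs : ∀ ξ : ℝ, |s ξ| ≤ K * ε ^ 3 * Real.exp (-(a * ε) * |ξ|))
    (w : ℤ → ℝ) (hw0 : ∀ j, 0 ≤ w j)
    (hw : ∀ j : ℤ, w j ≤ Real.exp (a * ε * (|(j : ℝ) - pp| + |(j : ℝ) - pm|))) :
    Real.sqrt (∑' j : ℤ, w j * (r ((j : ℝ) - pp) * s ((j : ℝ) - pm)) ^ 2) ≤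
      K ^ 2 * Real.sqrt (8 * Real.exp 1 / a) * ε ^ ((9 : ℝ) / 2) *
        Real.exp (-(a / 4 * ε) * (pp - pm)) := by
  obtain ⟨S, hS⟩ := cross_sum_bound (a * ε / 2) pp (by positivity) hε2
  have S2 := S.mul_left (K ^ 4 * ε ^ 10 * Real.exp (-(a / 2 * ε) * (pp - pm)))
  have hle : ∀ j : ℤ, w j * (r ((j : ℝ) - pp) * s ((j : ℝ) - pm)) ^ 2 ≤
      K ^ 4 * ε ^ 10 * Real.exp (-(a / 2 * ε) * (pp - pm)) *
        Real.exp (-(a * ε / 2) * |(j : ℝ) - pp|) := by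
    intro j
    set x := (j : ℝ) - pp with hx
    set z := (j : ℝ) - pm with hz
    have h1 : (r x * s z) ^ 2 ≤ (K * ε ^ 2 * Real.exp (-(a * ε) * |x|) *
        (K * ε ^ 3 * Real.exp (-(a * ε) * |z|))) ^ 2 := by
      rw [← sq_abs, abs_mul]
      gcongr
      · exact hr x
      · exact hs z
    have h2 : pp - pm ≤ |x| + |z| := by
      have := neg_abs_le x
      have := le_abs_self z
      linarith
    calc _ ≤ Real.exp (a * ε * (|x| + |z|)) * (K * ε ^ 2 * Real.exp (-(a * ε) * |x|) *
        (K * ε ^ 3 * Real.exp (-(a * ε) * |z|))) ^ 2 :=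
          mul_le_mul (hw j) h1 (sq_nonneg _) (Real.exp_pos _).le
      _ = K ^ 4 * ε ^ 10 * (Real.exp (a * ε * (|x| + |z|)) *
            (Real.exp (-(a * ε) * |x|) * Real.exp (-(a * ε) * |z|)) ^ 2) := by ring
      _ = K ^ 4 * ε ^ 10 * Real.exp (-(a * ε) * (|x| + |z|)) := by
          rw [← Real.exp_add, ← Real.exp_nat_mul, ← Real.exp_add]
          congr 2
          push_cast
          ring
      _ ≤ K ^ 4 * ε ^ 10 * Real.exp (-(a / 2 * ε) * (pp - pm) + -(a * ε / 2) * |x|) := by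
          gcongr
          have h3 : 0 < a * ε := by positivity
          nlinarith [abs_nonneg z, mul_le_mul_of_nonneg_left h2 h3.le,
            mul_nonneg h3.le (abs_nonneg z)]
      _ = _ := by rw [Real.exp_add]; ring
  have hs' := Summable.of_nonneg_of_le (fun j => mul_nonneg (hw0 j) (sq_nonneg _)) hle S2
  have ht := hs'.tsum_le_tsum hle S2
  rw [tsum_mul_left] at ht
  apply Real.sqrt_le_iff.2
  refine ⟨by positivity, ht.trans ?_⟩
  have e9 : (ε ^ ((9 : ℝ) / 2)) ^ 2 = ε ^ 9 := by
    rw [← Real.rpow_natCast, ← Real.rpow_mul hε.le, ← Real.rpow_natCast]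
    norm_num
  have ee : Real.exp (-(a / 4 * ε) * (pp - pm)) ^ 2 = Real.exp (-(a / 2 * ε) * (pp - pm)) := by
    rw [← Real.exp_nat_mul]
    congr 1
    push_cast
    ring
  rw [mul_pow, mul_pow, mul_pow, e9, ee, Real.sq_sqrt (by positivity)]
  calc _ ≤ K ^ 4 * ε ^ 10 * Real.exp (-(a / 2 * ε) * (pp - pm)) *
        (4 * Real.exp 1 / (a * ε / 2)) := by gcongr
    _ = _ := by field_simp; ring

/-- Cross-term estimate for two counterpropagating exponentially localized profiles:
if `|r(ξ)| ≤ Kε² e^{-aε|ξ|}` and `|s(ξ)| ≤ Kε³ e^{-aε|ξ|}`, then the product sequence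
`y_j = r(j - p₊) s(j - p₋)` satisfies `‖y‖ + ‖y‖₊ + ‖y‖₋ ≤ C ε^{9/2} e^{-bεd}` where
`d = p₊ - p₋` and `‖·‖₊`, `‖·‖₋` are the `e^{±2ε^{3/2}(j - p±)}`-weighted `ℓ²(ℤ)` norms. -/
theorem cross_term_weighted_l2_estimate
    (a K : ℝ) (ha : 0 < a) (hK : 0 < K) :
    ∃ C > (0 : ℝ), ∃ b > (0 : ℝ), ∃ ε₀ > (0 : ℝ), ∀ ε ∈ Set.Ioo (0 : ℝ) ε₀,
      ∀ pm pp : ℝ, pm ≤ pp → ∀ r s : ℝ → ℝ,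
      (∀ ξ : ℝ, |r ξ| ≤ K * ε ^ 2 * Real.exp (-(a * ε) * |ξ|)) →
      (∀ ξ : ℝ, |s ξ| ≤ K * ε ^ 3 * Real.exp (-(a * ε) * |ξ|)) →
      Real.sqrt (∑' j : ℤ, (r ((j : ℝ) - pp) * s ((j : ℝ) - pm)) ^ 2)
        + Real.sqrt (∑' j : ℤ, Real.exp (2 * ε ^ ((3 : ℝ) / 2) * ((j : ℝ) - pp)) *
            (r ((j : ℝ) - pp) * s ((j : ℝ) - pm)) ^ 2)
        + Real.sqrt (∑' j : ℤ, Real.exp (-(2 * ε ^ ((3 : ℝ) / 2)) * ((j : ℝ) - pm)) *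
            (r ((j : ℝ) - pp) * s ((j : ℝ) - pm)) ^ 2)
      ≤ C * ε ^ ((9 : ℝ) / 2) * Real.exp (-(b * ε) * (pp - pm)) := by
  refine ⟨3 * (K ^ 2 * Real.sqrt (8 * Real.exp 1 / a)), by positivity, a / 4, by positivity,
    min (a ^ 2 / 4) (2 / a), by positivity, ?_⟩
  rintro ε ⟨hε, hlt⟩ pm pp hp r s hr hs
  have hl1 : ε < a ^ 2 / 4 := hlt.trans_le (min_le_left _ _)
  have hl2 : ε < 2 / a := hlt.trans_le (min_le_right _ _)
  have hε2 : a * ε / 2 ≤ 1 := by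
    rw [lt_div_iff₀ ha] at hl2
    linarith
  have h32 : 2 * ε ^ ((3 : ℝ) / 2) ≤ a * ε := by
    have : ε ^ ((3 : ℝ) / 2) = ε * Real.sqrt ε := by
      rw [Real.sqrt_eq_rpow, show (3 : ℝ) / 2 = 1 + 1 / 2 by norm_num, Real.rpow_add hε,
        Real.rpow_one]
    rw [this]
    have : Real.sqrt ε ≤ a / 2 := by
      rw [Real.sqrt_le_left (by positivity)]
      nlinarith
    nlinarith
  have h0 : 0 < 2 * ε ^ ((3 : ℝ) / 2) := by positivity
  have hae : 0 < a * ε := by positivity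
  have key := cross_weighted a K ε pm pp ha hK hε hε2 hp r s hr hs
  have k1 := key (fun _ => 1) (fun _ => zero_le_one) (fun j => by
    rw [Real.one_le_exp_iff]; positivity)
  have k2 := key (fun j => Real.exp (2 * ε ^ ((3 : ℝ) / 2) * ((j : ℝ) - pp)))
    (fun _ => (Real.exp_pos _).le) (fun j => by
      rw [Real.exp_le_exp]
      have := mul_le_mul_of_nonneg_left (le_abs_self ((j : ℝ) - pp)) h0.le
      have := mul_le_mul_of_nonneg_right h32 (abs_nonneg ((j : ℝ) - pp))
      have := mul_nonneg hae.le (abs_nonneg ((j : ℝ) - pm))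
      linarith)
  have k3 := key (fun j => Real.exp (-(2 * ε ^ ((3 : ℝ) / 2)) * ((j : ℝ) - pm)))
    (fun _ => (Real.exp_pos _).le) (fun j => by
      rw [Real.exp_le_exp]
      have := mul_le_mul_of_nonneg_left (neg_abs_le ((j : ℝ) - pm)) h0.le
      have := mul_le_mul_of_nonneg_right h32 (abs_nonneg ((j : ℝ) - pm))
      have := mul_nonneg hae.le (abs_nonneg ((j : ℝ) - pp))
      linarith)
  simp only [one_mul] at k1
  linarith
end

section
/- Let a ∈ (0,1], let c₊, c₋ ∈ ℝ with |c₊| ≤ 2 and |c₋| ≤ 2, and let θ₊, θ₋ ∈ ℝ. Define three inner products on real sequences indexed by ℤ: ⟨x,y⟩ := Σ_j x_j y_j, ⟨x,y⟩₊ := Σ_j e^{2a(j−θ₊)} x_j y_j, and ⟨x,y⟩₋ := Σ_j e^{−2a(j−θ₋)} x_j y_j, with associated norms ‖·‖, ‖·‖₊, ‖·‖₋. Let ρ, π, g : ℤ → ℝ be sequences with finite norm in all three spaces, and set E := ½(‖ρ‖² + ‖ρ‖₊² + ‖ρ‖₋² + ‖π‖² + ‖π‖₊² + ‖π‖₋²).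 Then c₊·a·(‖ρ‖₊² + ‖π‖₊²) − c₋·a·(‖ρ‖₋² + ‖π‖₋²) + Σ_{⋄∈{ℓ²,+,−}} (⟨ρ,(S−I)π⟩_⋄ + ⟨π,(I−S⁻¹)ρ⟩_⋄ + ⟨π,g⟩_⋄) ≤ 16·a·E + Σ_{⋄∈{ℓ²,+,−}} ‖g‖_⋄·‖π‖_⋄. -/
/-- Unweighted `ℓ²(ℤ)` pairing `⟨x,y⟩ = Σ_j x_j y_j`. -/
noncomputable def ip0 (x y : ℤ → ℝ) : ℝ := ∑' j : ℤ, x j * y j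

/-- Weighted pairing `⟨x,y⟩ = Σ_j e^{2a(j-θ)} x_j y_j`. -/
noncomputable def ipw (a θ : ℝ) (x y : ℤ → ℝ) : ℝ :=
  ∑' j : ℤ, Real.exp (2 * a * ((j : ℝ) - θ)) * (x j * y j)

/-- The operator `S - I`, where `(Sx)_j = x_{j+1}`. -/
def SmI (x : ℤ → ℝ) : ℤ → ℝ := fun j => x (j + 1) - x j

/-- The operator `I - S⁻¹`, where `(S⁻¹x)_j = x_{j-1}`. -/
def ImSinv (x : ℤ → ℝ) : ℤ → ℝ := fun j => x j - x (j - 1)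

/-- Products of square-summable sequences are summable. -/
lemma aux_mul {ι : Type*} {u v : ι → ℝ} (hu : Summable fun j => u j ^ 2)
    (hv : Summable fun j => v j ^ 2) : Summable fun j => u j * v j := by
  refine Summable.of_norm_bounded (hu.add hv) fun j => ?_
  rw [Real.norm_eq_abs, abs_le]
  constructor <;> nlinarith [sq_nonneg (u j + v j), sq_nonneg (u j - v j), sq_nonneg (u j),
    sq_nonneg (v j)]

/-- Cauchy-Schwarz for series. -/
lemma aux_cs {ι : Type*} {u v : ι → ℝ} (hu : Summable fun j => u j ^ 2)
    (hv : Summable fun j => v j ^ 2) :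
    ∑' j, u j * v j ≤ Real.sqrt (∑' j, u j ^ 2) * Real.sqrt (∑' j, v j ^ 2) := by
  refine (aux_mul hu hv).tsum_le_of_sum_le fun s => ?_
  refine (Real.sum_mul_le_sqrt_mul_sqrt s u v).trans ?_
  gcongr
  · exact hu.sum_le_tsum s fun _ _ => sq_nonneg _
  · exact hv.sum_le_tsum s fun _ _ => sq_nonneg _

lemma aux_exp (b θ : ℝ) (j : ℤ) : Real.exp (2 * b * ((j : ℝ) - θ)) =
    Real.exp (b * ((j : ℝ) - θ)) * Real.exp (b * ((j : ℝ) - θ)) := by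
  rw [← Real.exp_add]; ring_nf

lemma aux_ipw (b θ : ℝ) (x y : ℤ → ℝ) : ipw b θ x y =
    ∑' j : ℤ, (Real.exp (b * ((j : ℝ) - θ)) * x j) * (Real.exp (b * ((j : ℝ) - θ)) * y j) := by
  unfold ipw
  refine tsum_congr fun j => ?_
  rw [aux_exp]; ring

lemma aux_ip0 (x y : ℤ → ℝ) : ip0 x y = ipw 0 0 x y := by
  simp [ip0, ipw]

lemma aux_sq (b θ : ℝ) (x : ℤ → ℝ)
    (h : Summable fun j : ℤ => Real.exp (2 * b * ((j : ℝ) - θ)) * (x j) ^ 2) :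
    Summable fun j : ℤ => (Real.exp (b * ((j : ℝ) - θ)) * x j) ^ 2 := by
  refine h.congr fun j => ?_
  rw [aux_exp]; ring

lemma aux_ipw_cs (b θ : ℝ) (x y : ℤ → ℝ)
    (hx : Summable fun j : ℤ => Real.exp (2 * b * ((j : ℝ) - θ)) * (x j) ^ 2)
    (hy : Summable fun j : ℤ => Real.exp (2 * b * ((j : ℝ) - θ)) * (y j) ^ 2) :
    ipw b θ x y ≤ Real.sqrt (ipw b θ y y) * Real.sqrt (ipw b θ x x) := by
  have := aux_cs (aux_sq b θ x hx) (aux_sq b θ y hy)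
  rw [aux_ipw, aux_ipw b θ y y, aux_ipw b θ x x, mul_comm (Real.sqrt _)]
  simpa only [sq] using this

lemma aux_nonneg (b θ : ℝ) (x : ℤ → ℝ) : 0 ≤ ipw b θ x x :=
  tsum_nonneg fun j => mul_nonneg (Real.exp_pos _).le (mul_self_nonneg _)

lemma aux_main (b θ : ℝ) (hb : |b| ≤ 1) (x y : ℤ → ℝ)
    (hx : Summable fun j : ℤ => Real.exp (2 * b * ((j : ℝ) - θ)) * (x j) ^ 2)
    (hy : Summable fun j : ℤ => Real.exp (2 * b * ((j : ℝ) - θ)) * (y j) ^ 2) :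
    ipw b θ x (SmI y) + ipw b θ y (ImSinv x) ≤ 2 * |b| * (ipw b θ x x + ipw b θ y y) := by
  have hu := aux_sq b θ x hx
  have hv := aux_sq b θ y hy
  rw [aux_ipw, aux_ipw, aux_ipw, aux_ipw]
  set u : ℤ → ℝ := fun j => Real.exp (b * ((j : ℝ) - θ)) * x j with hud
  set v : ℤ → ℝ := fun j => Real.exp (b * ((j : ℝ) - θ)) * y j with hvd
  change Summable fun j : ℤ => u j ^ 2 at hu
  change Summable fun j : ℤ => v j ^ 2 at hv
  have hv1 : Summable fun j : ℤ => v (j + 1) ^ 2 :=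
    (Equiv.addRight (1 : ℤ)).summable_iff.mpr hv
  have huv : Summable fun j : ℤ => u j * v j := aux_mul hu hv
  have huv1 : Summable fun j : ℤ => u j * v (j + 1) := aux_mul hu hv1
  have hvu : Summable fun j : ℤ => u (j - 1) * v j := by
    refine (Equiv.addRight (1 : ℤ)).summable_iff.mp (huv1.congr fun j => ?_)
    simp
  have e1 : ∀ j : ℤ, u j * (Real.exp (b * ((j : ℝ) - θ)) * SmI y j)
      = Real.exp (-b) * (u j * v (j + 1)) - u j * v j := by
    intro j
    have : Real.exp (b * ((j : ℝ) - θ))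
        = Real.exp (-b) * Real.exp (b * (((j + 1 : ℤ) : ℝ) - θ)) := by
      rw [← Real.exp_add]; push_cast; ring_nf
    simp only [SmI, hvd]
    rw [mul_sub (Real.exp _), mul_sub (u j)]
    nth_rewrite 1 [this]
    ring
  have e2 : ∀ j : ℤ, v j * (Real.exp (b * ((j : ℝ) - θ)) * ImSinv x j)
      = u j * v j - Real.exp b * (u (j - 1) * v j) := by
    intro j
    have : Real.exp (b * ((j : ℝ) - θ))
        = Real.exp b * Real.exp (b * (((j - 1 : ℤ) : ℝ) - θ)) := by
      rw [← Real.exp_add]; push_cast; ring_nf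
    simp only [ImSinv, hud]
    rw [mul_sub (Real.exp _), mul_sub (v j)]
    nth_rewrite 2 [this]
    ring
  have s1 : ∑' j : ℤ, u (j - 1) * v j = ∑' j : ℤ, u j * v (j + 1) := by
    rw [← (Equiv.addRight (1 : ℤ)).tsum_eq]
    simp
  have s2 : ∑' j : ℤ, v (j + 1) ^ 2 = ∑' j : ℤ, v j ^ 2 :=
    (Equiv.addRight (1 : ℤ)).tsum_eq (fun j => v j ^ 2)
  have E1 : ∑' j : ℤ, u j * (Real.exp (b * ((j : ℝ) - θ)) * SmI y j)
      = Real.exp (-b) * (∑' j : ℤ, u j * v (j + 1)) - ∑' j : ℤ, u j * v j := by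
    rw [tsum_congr e1, (huv1.mul_left _).tsum_sub huv, tsum_mul_left]
  have E2 : ∑' j : ℤ, v j * (Real.exp (b * ((j : ℝ) - θ)) * ImSinv x j)
      = (∑' j : ℤ, u j * v j) - Real.exp b * (∑' j : ℤ, u j * v (j + 1)) := by
    rw [tsum_congr e2, huv.tsum_sub (hvu.mul_left _), tsum_mul_left, s1]
  have E3 : (∑' j : ℤ, u j * u j) = ∑' j : ℤ, u j ^ 2 := by simp only [sq]
  have E4 : (∑' j : ℤ, v j * v j) = ∑' j : ℤ, v j ^ 2 := by simp only [sq]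
  change ∑' j : ℤ, u j * (Real.exp (b * ((j : ℝ) - θ)) * SmI y j)
    + ∑' j : ℤ, v j * (Real.exp (b * ((j : ℝ) - θ)) * ImSinv x j)
    ≤ 2 * |b| * (∑' j : ℤ, u j * u j + ∑' j : ℤ, v j * v j)
  rw [E1, E2, E3, E4]
  have c1 : ∑' j : ℤ, u j * v (j + 1) ≤ (∑' j : ℤ, u j ^ 2 + ∑' j : ℤ, v j ^ 2) / 2 := by
    rw [← s2, ← hu.tsum_add hv1, ← tsum_div_const]
    refine huv1.tsum_le_tsum (fun j => ?_) ((hu.add hv1).div_const 2)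
    nlinarith [sq_nonneg (u j - v (j + 1))]
  have c2 : -∑' j : ℤ, u j * v (j + 1) ≤ (∑' j : ℤ, u j ^ 2 + ∑' j : ℤ, v j ^ 2) / 2 := by
    rw [← s2, ← hu.tsum_add hv1, ← tsum_div_const, ← tsum_neg]
    refine huv1.neg.tsum_le_tsum (fun j => ?_) ((hu.add hv1).div_const 2)
    nlinarith [sq_nonneg (u j + v (j + 1))]
  have d1 := Real.abs_exp_sub_one_le hb
  have d2 := Real.abs_exp_sub_one_le (x := -b) (by rwa [abs_neg])
  rw [abs_neg] at d2
  have d3 : |Real.exp (-b) - Real.exp b| ≤ 4 * |b| := by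
    rw [abs_le] at *
    constructor <;> linarith [d1.1, d1.2, d2.1, d2.2]
  have c3 := abs_le.mpr ⟨neg_le.mp c2, c1⟩
  have f := mul_le_mul d3 c3 (abs_nonneg _) (by positivity)
  rw [← abs_mul] at f
  have := le_abs_self ((Real.exp (-b) - Real.exp b) * ∑' j : ℤ, u j * v (j + 1))
  linarith

/-- Fixed-time estimate for the derivative of the energy functional of the driven
discrete wave equation `ρ̇ = (S−I)π`, `π̇ = (I−S⁻¹)ρ + g`, computed simultaneously in
the unweighted `ℓ²(ℤ)` pairing and the two exponentially weighted pairings centered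
at `θ₊` and `θ₋`. -/
theorem energy_derivative_estimate
    (a : ℝ) (ha : a ∈ Set.Ioc (0 : ℝ) 1) (cp cm θp θm : ℝ)
    (hcp : |cp| ≤ 2) (hcm : |cm| ≤ 2)
    (ρ π g : ℤ → ℝ)
    (hsum : ∀ x ∈ ({ρ, π, g} : Set (ℤ → ℝ)),
      (Summable fun j : ℤ => (x j) ^ 2) ∧
      (Summable fun j : ℤ => Real.exp (2 * a * ((j : ℝ) - θp)) * (x j) ^ 2) ∧
      (Summable fun j : ℤ => Real.exp (-(2 * a) * ((j : ℝ) - θm)) * (x j) ^ 2)) :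
    cp * a * (ipw a θp ρ ρ + ipw a θp π π)
      - cm * a * (ipw (-a) θm ρ ρ + ipw (-a) θm π π)
      + (ip0 ρ (SmI π) + ip0 π (ImSinv ρ) + ip0 π g)
      + (ipw a θp ρ (SmI π) + ipw a θp π (ImSinv ρ) + ipw a θp π g)
      + (ipw (-a) θm ρ (SmI π) + ipw (-a) θm π (ImSinv ρ) + ipw (-a) θm π g)
    ≤ 16 * a * ((1 / 2) * (ip0 ρ ρ + ipw a θp ρ ρ + ipw (-a) θm ρ ρ
          + ip0 π π + ipw a θp π π + ipw (-a) θm π π))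
      + (Real.sqrt (ip0 g g) * Real.sqrt (ip0 π π)
          + Real.sqrt (ipw a θp g g) * Real.sqrt (ipw a θp π π)
          + Real.sqrt (ipw (-a) θm g g) * Real.sqrt (ipw (-a) θm π π)) := by
  obtain ⟨ha0, ha1⟩ := ha
  obtain ⟨r0, rp, rm⟩ := hsum ρ (by simp)
  obtain ⟨p0, pp, pm⟩ := hsum π (by simp)
  obtain ⟨g0, gp, gm⟩ := hsum g (by simp)
  simp only [← mul_neg] at rm pm gm
  have z : ∀ x : ℤ → ℝ, (Summable fun j : ℤ => (x j) ^ 2) →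
      Summable fun j : ℤ => Real.exp (2 * 0 * ((j : ℝ) - 0)) * (x j) ^ 2 := by
    intro x hx; simpa using hx
  have haa : |a| = a := abs_of_pos ha0
  have hab : |(-a)| = a := by rw [abs_neg, haa]
  have m0 := aux_main 0 0 (by simp) ρ π (z _ r0) (z _ p0)
  have mp := aux_main a θp (by rwa [haa]) ρ π rp pp
  have mm := aux_main (-a) θm (by rwa [hab]) ρ π rm pm
  have k0 := aux_ipw_cs 0 0 π g (z _ p0) (z _ g0)
  have kp := aux_ipw_cs a θp π g pp gp
  have km := aux_ipw_cs (-a) θm π g pm gm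
  rw [haa] at mp
  rw [hab] at mm
  rw [abs_zero] at m0
  simp only [aux_ip0]
  have n0 := mul_nonneg ha0.le (add_nonneg (aux_nonneg 0 0 ρ) (aux_nonneg 0 0 π))
  have np := mul_nonneg ha0.le (add_nonneg (aux_nonneg a θp ρ) (aux_nonneg a θp π))
  have nm := mul_nonneg ha0.le (add_nonneg (aux_nonneg (-a) θm ρ) (aux_nonneg (-a) θm π))
  have q1 := mul_le_mul_of_nonneg_right (abs_le.mp hcp).2 np
  have q2 := mul_le_mul_of_nonneg_right (abs_le.mp hcm).1 nm
  linarith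
end
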